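/- arXiv:0912.1685 — 5 statements merged into one kernel-verified Lean document; each statement's English description precedes it below -/
import Mathlib

section
/- (Multiplication/Hasse–Davenport product formula.) Let d ≥ 1 be an integer dividing q−1 and η a multiplicative character of F_q^*. Then g(η^d) · ∏_{χ^d = 𝟏, χ ≠ 𝟏} g(χ) = η(d)^d · ∏_{χ^d = 𝟏} g(ηχ), where both products run over multiplicative characters χ of F_q^* with χ^d trivial (and d is viewed as the element d·1 of F_q^*, which is nonzero since d divides q−1). -/
open Finset
open scoped Classical

/-!
Let `χ` have order `d` and let `p_d(f)` be the sum of the `d`-th powers of the roots of `f`. The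
power series `∑ η^d(∏ roots) φ(p_d(f)) T^(deg f)`, over all monic polynomials `f`, equals
`∏_{i < d} (1 + g(η χ^i) T)`. Both sides are determined by their logarithmic derivatives, which are
character sums over the finite extensions `L` of `F`, and these agree because `∑_{i < d} χ^i(N α)`
is the number of `d`-th roots of `α ≠ 0` in `L`. Compare the coefficients of `T^d`. Adding a
constant `c` to a polynomial of degree `d` changes `p_d` by `-d c`, so on the left `η(d)^d` times
the coefficient is `g(η^d) S`, where `S` does not depend on `η`. The case `η = 1` determines `S`.
-/

namespace HasseDavenport

open Polynomial
open scoped PowerSeries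

section PowerSeries

variable {R : Type*} [CommSemiring R]

theorem derivative_prod_eq_sum_mul {ι : Type*} (s : Finset ι) {f T : ι → R⟦X⟧}
    (h : ∀ i ∈ s, PowerSeries.derivative R (f i) = T i * f i) :
    PowerSeries.derivative R (∏ i ∈ s, f i) = (∑ i ∈ s, T i) * ∏ i ∈ s, f i := by
  induction s using Finset.induction_on with
  | empty => simp
  | insert a s ha ih =>
    rw [forall_mem_insert] at h
    rw [prod_insert ha, sum_insert ha, Derivation.leibniz, ih h.2, h.1, smul_eq_mul, smul_eq_mul]
    ring

theorem coeff_card_prod_one_add_C_mul_X {ι : Type*} (s : Finset ι) (a : ι → R) :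
    (∏ i ∈ s, (1 + PowerSeries.C (a i) * PowerSeries.X)).coeff #s = ∏ i ∈ s, a i := by
  have hpoly : ∏ i ∈ s, (1 + PowerSeries.C (a i) * PowerSeries.X) =
      ((∏ i ∈ s, (1 + C (a i) * X) : R[X]) : R⟦X⟧) := by
    rw [← coeToPowerSeries.ringHom_apply, map_prod]
    simp
  have hdeg : ∀ i ∈ s, (1 + C (a i) * X).natDegree ≤ 1 := fun i _ => by
    rw [add_comm]
    exact natDegree_linear_le
  have hcoeff := coeff_prod_of_natDegree_le s _ 1 hdeg
  rw [mul_one] at hcoeff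
  rw [hpoly, coeff_coe, hcoeff]
  simp [coeff_one]

theorem eq_of_derivative_eq_mul {R : Type*} [CommRing R] [IsDomain R] [CharZero R] {f g T : R⟦X⟧}
    (hf : PowerSeries.derivative R f = T * f) (hg : PowerSeries.derivative R g = T * g)
    (h0 : PowerSeries.constantCoeff f = PowerSeries.constantCoeff g) : f = g := by
  ext n
  induction n using Nat.strong_induction_on with
  | h n ih =>
    rcases n with _ | n
    · simpa using h0
    · have hcoeff : ∀ h : R⟦X⟧, PowerSeries.derivative R h = T * h →
          h.coeff (n + 1) * (n + 1) = ∑ p ∈ antidiagonal n, T.coeff p.1 * h.coeff p.2 :=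
        fun h hh => by rw [← PowerSeries.coeff_derivative, hh, PowerSeries.coeff_mul]
      refine mul_right_cancel₀ (Nat.cast_add_one_ne_zero n : (n + 1 : R) ≠ 0) ?_
      rw [hcoeff f hf, hcoeff g hg]
      refine sum_congr rfl fun p hp => ?_
      rw [ih p.2 (by have := mem_antidiagonal.1 hp; omega)]

end PowerSeries

section RootPowerSum

variable {K : Type*} [Field K]

/-- The generating series of the power sums of the roots of `f`. If `f = ∏ (X - aᵢ)`, then
`f.reverse = ∏ (1 - aᵢ X)`, whose logarithmic derivative gives `∑ₑ (∑ᵢ aᵢᵉ) Xᵉ`, the sum being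
over `e ≥ 1`. -/
noncomputable def rootPowerSumSeries (f : K[X]) : K⟦X⟧ :=
  -(PowerSeries.X * PowerSeries.derivative K (f.reverse : K⟦X⟧) * (f.reverse : K⟦X⟧)⁻¹)

/-- The sum of the `e`-th powers of the roots of `f` in a splitting field, with multiplicity, as an
element of the field of coefficients. For `e = 0` it is `0` rather than the number of roots. -/
noncomputable def rootPowerSum (e : ℕ) (f : K[X]) : K :=
  (rootPowerSumSeries f).coeff e

theorem rootPowerSumSeries_eq_iff {f : K[X]} (hf : f ≠ 0) {v : K⟦X⟧} :
    rootPowerSumSeries f = v ↔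
      v * (f.reverse : K⟦X⟧) =
        -(PowerSeries.X * PowerSeries.derivative K (f.reverse : K⟦X⟧)) := by
  have hinv : (f.reverse : K⟦X⟧) * (f.reverse : K⟦X⟧)⁻¹ = 1 :=
    PowerSeries.mul_inv_cancel _ (by simpa using hf)
  rw [rootPowerSumSeries]
  constructor
  · rintro rfl
    linear_combination
      -(PowerSeries.X * PowerSeries.derivative K (f.reverse : K⟦X⟧)) * hinv
  · intro h
    linear_combination -(f.reverse : K⟦X⟧)⁻¹ * h + v * hinv

theorem rootPowerSum_mul (e : ℕ) {f g : K[X]} (hf : f ≠ 0) (hg : g ≠ 0) :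
    rootPowerSum e (f * g) = rootPowerSum e f + rootPowerSum e g := by
  have hseries : rootPowerSumSeries (f * g) = rootPowerSumSeries f + rootPowerSumSeries g := by
    rw [rootPowerSumSeries_eq_iff (mul_ne_zero hf hg), reverse_mul_of_domain, Polynomial.coe_mul,
      Derivation.leibniz, smul_eq_mul, smul_eq_mul]
    linear_combination (g.reverse : K⟦X⟧) * (rootPowerSumSeries_eq_iff hf).1 rfl +
      (f.reverse : K⟦X⟧) * (rootPowerSumSeries_eq_iff hg).1 rfl
  rw [rootPowerSum, hseries, map_add, rootPowerSum, rootPowerSum]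

theorem rootPowerSum_one (e : ℕ) : rootPowerSum e (1 : K[X]) = 0 := by
  simpa using rootPowerSum_mul e (one_ne_zero (α := K[X])) (one_ne_zero (α := K[X]))

theorem rootPowerSum_prod {ι : Type*} (e : ℕ) (s : Finset ι) {f : ι → K[X]}
    (hf : ∀ i ∈ s, f i ≠ 0) :
    rootPowerSum e (∏ i ∈ s, f i) = ∑ i ∈ s, rootPowerSum e (f i) := by
  induction s using Finset.induction_on with
  | empty => exact rootPowerSum_one e
  | insert a s ha ih =>
    rw [forall_mem_insert] at hf
    rw [prod_insert ha, sum_insert ha, rootPowerSum_mul e hf.1 (prod_ne_zero_iff.2 hf.2), ih hf.2]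

theorem rootPowerSum_map {L : Type*} [Field L] (ψ : K →+* L) (e : ℕ) (f : K[X]) :
    rootPowerSum e (f.map ψ) = ψ (rootPowerSum e f) := by
  rcases eq_or_ne f 0 with rfl | hf
  · simp [rootPowerSum, rootPowerSumSeries]
  have hreverse : ((f.map ψ).reverse : L⟦X⟧) = PowerSeries.map ψ f.reverse := by
    rw [← polynomial_map_coe]
    congr 1
    ext n
    simp [coeff_reverse]
  have hderivative : ∀ g : K⟦X⟧, PowerSeries.derivative L (PowerSeries.map ψ g) =
      PowerSeries.map ψ (PowerSeries.derivative K g) := fun g => by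
    ext n
    simp [PowerSeries.coeff_derivative]
  have hseries : rootPowerSumSeries (f.map ψ) = PowerSeries.map ψ (rootPowerSumSeries f) := by
    rw [rootPowerSumSeries_eq_iff (by simpa using hf), hreverse, hderivative, ← map_mul,
      (rootPowerSumSeries_eq_iff hf).1 rfl, map_neg, map_mul, PowerSeries.map_X]
  rw [rootPowerSum, hseries, PowerSeries.coeff_map, rootPowerSum]

theorem mk_pow_mul_one_sub_C_mul_X (a : K) :
    (PowerSeries.mk fun n => a ^ n) * (1 - PowerSeries.C a * PowerSeries.X) = 1 := by
  have hgeom := congrArg (PowerSeries.rescale a) (PowerSeries.mk_one_mul_one_sub_eq_one K)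
  simpa [PowerSeries.rescale_mk] using hgeom

theorem rootPowerSum_X_sub_C {e : ℕ} (he : e ≠ 0) (a : K) :
    rootPowerSum e (X - C a) = a ^ e := by
  have hreverse : ((X - C a).reverse : K⟦X⟧) = 1 - PowerSeries.C a * PowerSeries.X := by
    have hX : (X : K[X]).reverse = 1 := by
      rw [← mul_one X, reverse_X_mul, ← C_1, reverse_C]
    rw [sub_eq_add_neg, ← C_neg, reverse_add_C, hX]
    simp [sub_eq_add_neg]
  have hseries : rootPowerSumSeries (X - C a) = (PowerSeries.mk fun n => a ^ n) - 1 := by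
    rw [rootPowerSumSeries_eq_iff (X_sub_C_ne_zero a), hreverse, sub_mul,
      mk_pow_mul_one_sub_C_mul_X]
    simp only [map_sub, Derivation.map_one_eq_zero, Derivation.leibniz,
      PowerSeries.derivative_X, PowerSeries.derivative_C, smul_eq_mul]
    ring
  simp [rootPowerSum, hseries, PowerSeries.coeff_one, he]

theorem rootPowerSum_one_eq_neg_nextCoeff {f : K[X]} (hf : f.Monic) :
    rootPowerSum 1 f = -f.nextCoeff := by
  rw [rootPowerSum, rootPowerSumSeries, mul_assoc, map_neg, ← zero_add 1,
    PowerSeries.coeff_succ_X_mul]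
  simp [PowerSeries.coeff_mul, PowerSeries.coeff_derivative, hf.leadingCoeff, coeff_one_reverse]

theorem X_mul_derivative_coe_C_mul_X_pow (c : K) (n : ℕ) :
    PowerSeries.X * PowerSeries.derivative K ((C c * X ^ n : K[X]) : K⟦X⟧) =
      PowerSeries.X ^ n * PowerSeries.C (n * c) := by
  rcases n with _ | n
  · simp
  · simp only [Polynomial.coe_mul, coe_C, Polynomial.coe_pow, coe_X, Derivation.leibniz,
      Derivation.leibniz_pow, PowerSeries.derivative_X, PowerSeries.derivative_C, smul_eq_mul,
      nsmul_eq_mul, map_mul, map_natCast, Nat.add_sub_cancel]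
    ring

theorem rootPowerSum_natDegree_add_C {f : K[X]} (hf : f.Monic) (hdeg : f.natDegree ≠ 0) (c : K) :
    rootPowerSum f.natDegree (f + C c) = rootPowerSum f.natDegree f - f.natDegree * c := by
  set n := f.natDegree with hn
  have hf' : f + C c ≠ 0 := by
    rintro h
    exact hdeg (by rw [hn, ← natDegree_add_C (a := c), h, natDegree_zero])
  have hinv : (f.reverse : K⟦X⟧) * (f.reverse : K⟦X⟧)⁻¹ = 1 :=
    PowerSeries.mul_inv_cancel _ (by simp [hf.leadingCoeff])
  have hadd := (rootPowerSumSeries_eq_iff hf').1 rfl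
  rw [reverse_add_C, Polynomial.coe_add, map_add, mul_add PowerSeries.X,
    X_mul_derivative_coe_C_mul_X_pow, Polynomial.coe_mul, Polynomial.coe_pow, coe_X, coe_C,
    ← hn] at hadd
  have hseries : rootPowerSumSeries (f + C c) = rootPowerSumSeries f - PowerSeries.X ^ n *
      ((PowerSeries.C (n * c) + PowerSeries.C c * rootPowerSumSeries (f + C c)) *
        (f.reverse : K⟦X⟧)⁻¹) := by
    linear_combination
      (f.reverse : K⟦X⟧)⁻¹ * (hadd - (rootPowerSumSeries_eq_iff hf.ne_zero).1 rfl) -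
      (rootPowerSumSeries (f + C c) - rootPowerSumSeries f) * hinv
  rw [rootPowerSum, hseries, map_sub, ← rootPowerSum, PowerSeries.coeff_X_pow_mul']
  simp [rootPowerSumSeries, hf.leadingCoeff]

end RootPowerSum

section ConjPoly

variable (F : Type*) {L : Type*} [Field F] [Field L] [Algebra F L]

/-- The characteristic polynomial of `α` over `F`, written as the power of the minimal polynomial
whose degree is `[L : F]`. -/
noncomputable def conjPoly (α : L) : F[X] :=
  minpoly F α ^ (Module.finrank F L / (minpoly F α).natDegree)

variable [FiniteDimensional F L] (α : L)

theorem conjPoly_monic : (conjPoly F α).Monic :=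
  (minpoly.monic (Algebra.IsIntegral.isIntegral α)).pow _

theorem conjPoly_natDegree : (conjPoly F α).natDegree = Module.finrank F L := by
  rw [conjPoly, natDegree_pow,
    Nat.div_mul_cancel (minpoly.degree_dvd (Algebra.IsIntegral.isIntegral α))]

theorem minpoly_dvd_conjPoly : minpoly F α ∣ conjPoly F α :=
  dvd_pow_self _ (Nat.div_pos (minpoly.natDegree_le α)
    (minpoly.natDegree_pos (Algebra.IsIntegral.isIntegral α))).ne'

variable [IsGalois F L]

theorem exists_minpoly_pow_map_eq_prod :
    ∃ k, (minpoly F α ^ k).map (algebraMap F L) = ∏ σ : Gal(L/F), (X - C (σ α)) := by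
  obtain ⟨g, hg, -, hmonic⟩ := lifts_and_natDegree_eq_and_monic
    (Algebra.IsInvariant.charpoly_mem_lifts F L Gal(L/F) α)
    (MulSemiringAction.monic_charpoly Gal(L/F) α)
  rw [MulSemiringAction.charpoly_eq] at hg
  have hdvd : g ∣ minpoly F α ^ Fintype.card Gal(L/F) := by
    rw [← map_dvd_map' (algebraMap F L), hg, Polynomial.map_pow, ← card_univ, ← prod_const]
    refine prod_dvd_prod_of_dvd _ _ fun σ _ => ?_
    rw [dvd_iff_isRoot, IsRoot, eval_map_algebraMap, AlgEquiv.smul_def,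
      ← minpoly.algEquiv_eq σ α, minpoly.aeval]
  obtain ⟨k, -, hk⟩ :=
    (dvd_prime_pow (minpoly.prime (Algebra.IsIntegral.isIntegral α)) _).1 hdvd
  refine ⟨k, ?_⟩
  rw [← eq_of_monic_of_associated hmonic
    ((minpoly.monic (Algebra.IsIntegral.isIntegral α)).pow k) hk, hg]
  rfl

theorem conjPoly_map :
    (conjPoly F α).map (algebraMap F L) = ∏ σ : Gal(L/F), (X - C (σ α)) := by
  obtain ⟨k, hk⟩ := exists_minpoly_pow_map_eq_prod F α
  have hdeg : k * (minpoly F α).natDegree = Module.finrank F L := by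
    rw [← natDegree_pow, ← natDegree_map (algebraMap F L), hk,
      natDegree_prod_of_monic _ _ fun σ _ => monic_X_sub_C _]
    simp [← Nat.card_eq_fintype_card, IsGalois.card_aut_eq_finrank]
  rw [conjPoly, ← hdeg,
    Nat.mul_div_cancel _ (minpoly.natDegree_pos (Algebra.IsIntegral.isIntegral α)), hk]

theorem neg_one_pow_mul_coeff_zero_conjPoly :
    (-1) ^ (conjPoly F α).natDegree * (conjPoly F α).coeff 0 = Algebra.norm F α := by
  apply (algebraMap F L).injective
  rw [Algebra.norm_eq_prod_automorphisms, map_mul, ← coeff_map, conjPoly_map, conjPoly_natDegree,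
    coeff_zero_prod, ← IsGalois.card_aut_eq_finrank, Nat.card_eq_fintype_card, ← card_univ]
  simp only [map_pow, map_neg, map_one, coeff_sub, coeff_X_zero, coeff_C_zero, zero_sub]
  rw [← prod_const, ← prod_mul_distrib]
  simp

theorem rootPowerSum_conjPoly {e : ℕ} (he : e ≠ 0) :
    rootPowerSum e (conjPoly F α) = Algebra.trace F L (α ^ e) := by
  apply (algebraMap F L).injective
  rw [← rootPowerSum_map, conjPoly_map, trace_eq_sum_automorphisms,
    rootPowerSum_prod _ _ fun σ _ => X_sub_C_ne_zero _]
  simp [rootPowerSum_X_sub_C he]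

end ConjPoly

section Counting

theorem card_filter_minpoly_eq {F L : Type*} [Field F] [Finite F] [Field L] [Fintype L]
    [Algebra F L] {P : F[X]} (hP : Irreducible P) (hmonic : P.Monic) :
    #{α : L | minpoly F α = P} = if P.natDegree ∣ Module.finrank F L then P.natDegree else 0 := by
  split_ifs with h
  · have hdvd : P.map (algebraMap F L) ∣ X ^ Nat.card L - X := by
      have := map_dvd (algebraMap F L) (hP.natDegree_dvd_iff_dvd_X_pow_card_pow_sub_X.1 h)
      rwa [← Module.natCard_eq_pow_finrank, Polynomial.map_sub, Polynomial.map_pow, map_X] at this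
    have hsplits : (P.map (algebraMap F L)).Splits := by
      rw [Nat.card_eq_fintype_card] at hdvd
      refine Splits.of_dvd ?_ (FiniteField.X_pow_card_sub_X_ne_zero L Fintype.one_lt_card) hdvd
      simpa using (FiniteField.isSplittingField_sub L F).splits
    rw [← card_rootSet_eq_natDegree (PerfectField.separable_of_irreducible hP) hsplits,
      ← Set.toFinset_card]
    congr 1
    ext α
    simp only [mem_filter_univ, Set.mem_toFinset, mem_rootSet]
    exact ⟨fun h => h ▸ ⟨h ▸ hP.ne_zero, minpoly.aeval F α⟩,
      fun h => (minpoly.eq_of_irreducible_of_monic hP h.2 hmonic).symm⟩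
  · rw [card_eq_zero, filter_eq_empty_iff]
    rintro α - rfl
    exact h (minpoly.degree_dvd (Algebra.IsIntegral.isIntegral α))

variable {F : Type*} {L : Type*} [Field F] [Field L] [Algebra F L] [FiniteDimensional F L]

theorem conjPoly_dvd_irreducible_pow_iff {P : F[X]} (hP : Irreducible P) (hmonic : P.Monic)
    {i : ℕ} {α : L} :
    conjPoly F α ∣ P ^ i ↔ minpoly F α = P ∧ Module.finrank F L ≤ i * P.natDegree := by
  have hα : IsIntegral F α := Algebra.IsIntegral.isIntegral α
  constructor
  · intro h
    have hdvd : minpoly F α ∣ P :=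
      (minpoly.prime hα).dvd_of_dvd_pow ((minpoly_dvd_conjPoly F α).trans h)
    refine ⟨eq_of_monic_of_associated (minpoly.monic hα) hmonic
      ((minpoly.irreducible hα).associated_of_dvd hP hdvd), ?_⟩
    rw [← conjPoly_natDegree F α, ← natDegree_pow]
    exact natDegree_le_of_dvd h (pow_ne_zero i hP.ne_zero)
  · rintro ⟨rfl, h⟩
    exact pow_dvd_pow _ (Nat.div_le_of_le_mul (by rwa [mul_comm]))

theorem conjPoly_dvd_mul_iff {x y : F[X]} (h : IsRelPrime x y) {α : L} :
    conjPoly F α ∣ x * y ↔ conjPoly F α ∣ x ∨ conjPoly F α ∣ y := by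
  refine ⟨fun hdvd => ?_, fun h => h.elim (·.mul_right y) (·.mul_left x)⟩
  have hprime := minpoly.prime (Algebra.IsIntegral.isIntegral (R := F) α)
  by_cases hx : minpoly F α ∣ x
  · exact .inl (hprime.pow_dvd_of_dvd_mul_right _
      (fun hy => hprime.not_isUnit (h hx hy)) hdvd)
  · exact .inr (hprime.pow_dvd_of_dvd_mul_left _ hx hdvd)

theorem not_isUnit_conjPoly (α : L) : ¬ IsUnit (conjPoly F α) := fun h =>
  minpoly.not_isUnit F α (isUnit_of_dvd_unit (minpoly_dvd_conjPoly F α) h)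

variable [Fintype L]

theorem card_conjPoly_dvd_irreducible_pow [Finite F] {P : F[X]} (hP : Irreducible P)
    (hmonic : P.Monic) (i : ℕ) :
    #{α : L | conjPoly F α ∣ P ^ i} =
      if P.natDegree ∣ Module.finrank F L ∧ Module.finrank F L ≤ i * P.natDegree
        then P.natDegree else 0 := by
  by_cases hle : Module.finrank F L ≤ i * P.natDegree
  · simp only [conjPoly_dvd_irreducible_pow_iff hP hmonic, hle, and_true,
      card_filter_minpoly_eq hP hmonic]
  · simp [conjPoly_dvd_irreducible_pow_iff hP hmonic, hle]

theorem card_conjPoly_dvd_mul {x y : F[X]} (h : IsRelPrime x y) :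
    #{α : L | conjPoly F α ∣ x * y} =
      #{α : L | conjPoly F α ∣ x} + #{α : L | conjPoly F α ∣ y} := by
  rw [← card_union_of_disjoint, ← filter_or]
  · simp only [conjPoly_dvd_mul_iff h]
  · exact disjoint_filter.2 fun α _ hx hy => not_isUnit_conjPoly α (h hx hy)

end Counting

section Extension

variable {F : Type*} [Field F] [Finite F] (p : ℕ) [Fact p.Prime] [CharP F p]

noncomputable instance fintypeExtension (n : ℕ) [NeZero n] :
    Fintype (FiniteField.Extension F p n) :=
  Fintype.ofFinite _

theorem sum_card_conjPoly_dvd_irreducible_pow {P : F[X]} (hP : Irreducible P) (hmonic : P.Monic)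
    (i : ℕ) {N : ℕ} (hN : i * P.natDegree ≤ N) :
    ∑ k ∈ range N, #{α : FiniteField.Extension F p (k + 1) | conjPoly F α ∣ P ^ i} =
      i * P.natDegree := by
  simp only [card_conjPoly_dvd_irreducible_pow hP hmonic, FiniteField.finrank_extension]
  rw [← sum_filter, sum_const, smul_eq_mul]
  have hrange : {k ∈ range N | P.natDegree ∣ k + 1 ∧ k + 1 ≤ i * P.natDegree} =
      {k ∈ range (i * P.natDegree) | P.natDegree ∣ k + 1} := by
    ext k
    simp only [mem_filter, mem_range]
    grind
  rw [hrange, Nat.card_multiples, Nat.mul_div_cancel _ hP.natDegree_pos]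

theorem sum_card_conjPoly_dvd {h : F[X]} (hh : h ≠ 0) {N : ℕ} (hN : h.natDegree ≤ N) :
    ∑ k ∈ range N, #{α : FiniteField.Extension F p (k + 1) | conjPoly F α ∣ h} = h.natDegree := by
  induction h using UniqueFactorizationMonoid.induction_on_coprime with
  | h0 => exact absurd rfl hh
  | h1 hu =>
    rw [natDegree_eq_zero_of_isUnit hu]
    refine sum_eq_zero fun k _ => ?_
    rw [card_eq_zero, filter_eq_empty_iff]
    exact fun α _ hdvd => not_isUnit_conjPoly α (isUnit_of_dvd_unit hdvd hu)
  | @hpr P i hP =>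
    have hassoc : Associated (normalize P) P := normalize_associated P
    have hdeg : (normalize P).natDegree = P.natDegree := natDegree_eq_of_degree_eq degree_normalize
    rw [natDegree_pow, ← hdeg] at hN ⊢
    simp only [← (hassoc.pow_pow (n := i)).dvd_iff_dvd_right]
    exact sum_card_conjPoly_dvd_irreducible_pow p (hassoc.symm.irreducible hP.irreducible)
      (monic_normalize hP.ne_zero) i hN
  | @hcp x y hxy hx hy =>
    rw [natDegree_mul (left_ne_zero_of_mul hh) (right_ne_zero_of_mul hh)] at hN ⊢
    simp only [card_conjPoly_dvd_mul hxy, sum_add_distrib]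
    rw [hx (left_ne_zero_of_mul hh) (by omega), hy (right_ne_zero_of_mul hh) (by omega)]

end Extension

section Monics

variable (F : Type*) [Field F] [Finite F]

theorem finite_monic_natDegree_eq (n : ℕ) : {f : F[X] | f.Monic ∧ f.natDegree = n}.Finite := by
  have hfinite : (degreeLT F (n + 1) : Set F[X]).Finite := by
    have := Module.finite_of_finite F (M := degreeLT F (n + 1))
    exact Set.toFinite _
  refine hfinite.subset fun f hf => ?_
  rw [SetLike.mem_coe, mem_degreeLT, degree_eq_natDegree hf.1.ne_zero, hf.2]
  exact_mod_cast n.lt_succ_self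

/-- The monic polynomials of degree `n` over a finite field. -/
noncomputable def monicPolynomials (n : ℕ) : Finset F[X] :=
  (finite_monic_natDegree_eq F n).toFinset

variable {F} {n : ℕ}

theorem mem_monicPolynomials {f : F[X]} :
    f ∈ monicPolynomials F n ↔ f.Monic ∧ f.natDegree = n := by
  simp [monicPolynomials]

theorem monicPolynomials_zero : monicPolynomials F 0 = {1} := by
  ext f
  rw [mem_monicPolynomials, mem_singleton]
  exact ⟨fun h => h.1.natDegree_eq_zero.1 h.2, by rintro rfl; simp⟩

theorem add_mem_monicPolynomials {f g : F[X]} (hf : f ∈ monicPolynomials F n) (hg : g.degree < n) :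
    f + g ∈ monicPolynomials F n := by
  rw [mem_monicPolynomials] at hf ⊢
  have hdeg : g.degree < f.degree := by rwa [degree_eq_natDegree hf.1.ne_zero, hf.2]
  exact ⟨hf.1.add_of_left hdeg, by rw [natDegree_add_eq_left_of_degree_lt hdeg, hf.2]⟩

theorem sum_monicPolynomials_add {A : Type*} [AddCommMonoid A] {g : F[X]} (hg : g.degree < n)
    (w : F[X] → A) :
    ∑ f ∈ monicPolynomials F n, w (f + g) = ∑ f ∈ monicPolynomials F n, w f :=
  sum_bij' (fun f _ => f + g) (fun f _ => f - g) (fun f hf => add_mem_monicPolynomials hf hg)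
    (fun f hf => sub_eq_add_neg f g ▸ add_mem_monicPolynomials hf (by rwa [degree_neg]))
    (fun f _ => add_sub_cancel_right f g) (fun f _ => sub_add_cancel f g) (fun f _ => rfl)

theorem sum_monicPolynomials_mul {A : Type*} [AddCommMonoid A] {P : F[X]} (hP : P.Monic) (j : ℕ)
    (w : F[X] → A) :
    ∑ g ∈ monicPolynomials F j, w (P * g) =
      ∑ h ∈ monicPolynomials F (P.natDegree + j) with P ∣ h, w h := by
  refine sum_bij (fun g _ => P * g) (fun g hg => ?_)
    (fun g _ g' _ h => mul_left_cancel₀ hP.ne_zero h) (fun h hh => ?_) (fun g _ => rfl)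
  · rw [mem_monicPolynomials] at hg
    rw [mem_filter, mem_monicPolynomials, hP.natDegree_mul hg.1, hg.2]
    exact ⟨⟨hP.mul hg.1, rfl⟩, dvd_mul_right P g⟩
  · rw [mem_filter, mem_monicPolynomials] at hh
    obtain ⟨⟨hmonic, hdeg⟩, g, rfl⟩ := hh
    have hg : g.Monic := hP.of_mul_monic_left hmonic
    rw [hP.natDegree_mul hg, Nat.add_left_cancel_iff] at hdeg
    exact ⟨g, mem_monicPolynomials.2 ⟨hg, hdeg⟩, rfl⟩

theorem sum_monicPolynomials_one {A : Type*} [AddCommMonoid A] [Fintype F] (w : F[X] → A) :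
    ∑ f ∈ monicPolynomials F 1, w f = ∑ a : F, w (X - C a) := by
  refine (sum_bij (fun a _ => X - C a) (fun a _ => ?_) (fun a _ b _ h => ?_) (fun f hf => ?_)
    (fun a _ => rfl)).symm
  · exact mem_monicPolynomials.2 ⟨monic_X_sub_C a, natDegree_X_sub_C a⟩
  · exact C_injective (sub_right_injective h)
  · obtain ⟨hmonic, hdeg⟩ := mem_monicPolynomials.1 hf
    refine ⟨-f.coeff 0, mem_univ _, ?_⟩
    rw [C_neg, sub_neg_eq_add, ← hmonic.eq_X_add_C hdeg]

end Monics

section LSeries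

variable {F R : Type*} [Field F] [Finite F] [CommRing R]

/-- The `L`-series `∑ w(f) T^(deg f)`, over all monic polynomials `f`, of a completely
multiplicative function `w` on `F[X]`. -/
noncomputable def lSeries (w : F[X] →* R) : R⟦X⟧ :=
  PowerSeries.mk fun n => ∑ f ∈ monicPolynomials F n, w f

theorem coeff_lSeries (w : F[X] →* R) (n : ℕ) :
    (lSeries w).coeff n = ∑ f ∈ monicPolynomials F n, w f :=
  PowerSeries.coeff_mk _ _

theorem constantCoeff_lSeries (w : F[X] →* R) : PowerSeries.constantCoeff (lSeries w) = 1 := by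
  rw [← PowerSeries.coeff_zero_eq_constantCoeff_apply, coeff_lSeries, monicPolynomials_zero,
    sum_singleton, map_one]

variable (p : ℕ) [Fact p.Prime] [CharP F p]

/-- The logarithmic derivative of `lSeries w`, read off its Euler product: the coefficient of `T^k`
is a sum over the extension of `F` of degree `k + 1`, where the roots of a monic irreducible `P`
together contribute `deg P * w(P)^m` with `m * deg P = k + 1`. -/
noncomputable def logDerivSeries (w : F[X] →* R) : R⟦X⟧ :=
  PowerSeries.mk fun k => ∑ α : FiniteField.Extension F p (k + 1), w (conjPoly F α)

theorem sum_conjPoly_mul_sum_monicPolynomials (w : F[X] →* R) {n i j : ℕ} (h : i + j = n) :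
    (∑ α : FiniteField.Extension F p (i + 1), w (conjPoly F α)) *
        ∑ g ∈ monicPolynomials F j, w g =
      ∑ f ∈ monicPolynomials F (n + 1),
        #{α : FiniteField.Extension F p (i + 1) | conjPoly F α ∣ f} * w f := by
  have hterm : ∀ α : FiniteField.Extension F p (i + 1),
      w (conjPoly F α) * ∑ g ∈ monicPolynomials F j, w g =
        ∑ f ∈ monicPolynomials F (n + 1), if conjPoly F α ∣ f then w f else 0 := fun α => by
    have hdeg : (conjPoly F α).natDegree + j = n + 1 := by
      rw [conjPoly_natDegree, FiniteField.finrank_extension]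
      omega
    rw [mul_sum, ← sum_filter, ← hdeg, ← sum_monicPolynomials_mul (conjPoly_monic F α) j w]
    simp only [map_mul]
  rw [sum_mul, sum_congr rfl fun α _ => hterm α, sum_comm]
  refine sum_congr rfl fun f _ => ?_
  rw [← sum_filter, sum_const, nsmul_eq_mul]

theorem derivative_lSeries (w : F[X] →* R) :
    PowerSeries.derivative R (lSeries w) = logDerivSeries p w * lSeries w := by
  -- A monic `f` is written as `conjPoly α * g`, for `α` in some extension, in `deg f` ways.
  ext n
  symm
  simp only [PowerSeries.coeff_mul, logDerivSeries, PowerSeries.coeff_mk, coeff_lSeries,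
    PowerSeries.coeff_derivative]
  rw [sum_congr rfl fun x hx =>
      sum_conjPoly_mul_sum_monicPolynomials p w (mem_antidiagonal.1 hx),
    Nat.sum_antidiagonal_eq_sum_range_succ_mk, sum_comm, sum_mul]
  refine sum_congr rfl fun f hf => ?_
  obtain ⟨hmonic, hdeg⟩ := mem_monicPolynomials.1 hf
  rw [← sum_mul, ← Nat.cast_sum, sum_card_conjPoly_dvd p hmonic.ne_zero hdeg.le, hdeg, mul_comm]
  push_cast
  rfl

end LSeries

section PolyChar

variable {F R : Type*} [Field F] [CommRing R]

/-- The completely multiplicative function on `F[X]` sending `∏ (X - aᵢ)` to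
`θ (∏ aᵢ) * φ (∑ aᵢᵉ)`. -/
noncomputable def polyChar (θ : MulChar F R) (φ : AddChar F R) (e : ℕ) : F[X] →* R where
  toFun f := θ ((-1) ^ f.natDegree * f.coeff 0) * φ (rootPowerSum e f)
  map_one' := by simp [rootPowerSum_one]
  map_mul' f g := by
    rcases eq_or_ne f 0 with rfl | hf
    · simp [MulChar.map_zero]
    rcases eq_or_ne g 0 with rfl | hg
    · simp [MulChar.map_zero]
    rw [natDegree_mul hf hg, mul_coeff_zero, rootPowerSum_mul e hf hg, pow_add, mul_mul_mul_comm,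
      map_mul, AddChar.map_add_eq_mul, mul_mul_mul_comm]

theorem polyChar_apply (θ : MulChar F R) (φ : AddChar F R) (e : ℕ) (f : F[X]) :
    polyChar θ φ e f = θ ((-1) ^ f.natDegree * f.coeff 0) * φ (rootPowerSum e f) :=
  rfl

theorem polyChar_X_sub_C (θ : MulChar F R) (φ : AddChar F R) {e : ℕ} (he : e ≠ 0) (a : F) :
    polyChar θ φ e (X - C a) = θ a * φ (a ^ e) := by
  simp [polyChar_apply, rootPowerSum_X_sub_C he]

theorem polyChar_conjPoly (θ : MulChar F R) (φ : AddChar F R) {e : ℕ} (he : e ≠ 0)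
    {L : Type*} [Field L] [Algebra F L] [FiniteDimensional F L] [IsGalois F L] (α : L) :
    polyChar θ φ e (conjPoly F α) =
      θ (Algebra.norm F α) * φ (Algebra.trace F L (α ^ e)) := by
  rw [polyChar_apply, neg_one_pow_mul_coeff_zero_conjPoly, rootPowerSum_conjPoly F α he]

theorem polyChar_one_add_C_mul_X_pow (θ : MulChar F R) (φ : AddChar F R) {f : F[X]}
    (hf : f.Monic) {n : ℕ} (hn : n ≠ 0) (hdeg : f.natDegree = n + 1) (b : F) :
    polyChar θ φ 1 (f + C b * X ^ n) = φ (-b) * polyChar θ φ 1 f := by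
  have hlt : (C b * X ^ n).degree < f.degree := by
    rw [degree_eq_natDegree hf.ne_zero, hdeg]
    exact (degree_C_mul_X_pow_le n b).trans_lt (by exact_mod_cast n.lt_succ_self)
  have hdeg' : (f + C b * X ^ n).natDegree = n + 1 := by
    rw [natDegree_add_eq_left_of_degree_lt hlt, hdeg]
  have hnext : ∀ {g : F[X]}, g.natDegree = n + 1 → g.nextCoeff = g.coeff n := fun {g} hg => by
    rw [nextCoeff_of_natDegree_pos (by omega), hg, Nat.add_sub_cancel]
  simp only [polyChar_apply, rootPowerSum_one_eq_neg_nextCoeff hf,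
    rootPowerSum_one_eq_neg_nextCoeff (hf.add_of_left hlt), hnext hdeg, hnext hdeg', hdeg, hdeg',
    coeff_add, coeff_C_mul_X_pow, if_pos, if_neg hn.symm, add_zero, neg_add,
    AddChar.map_add_eq_mul]
  ring

variable [IsDomain R]

theorem sum_monicPolynomials_polyChar_one_eq_zero [Finite F] (θ : MulChar F R) {φ : AddChar F R}
    (hφ : φ ≠ 1) {n : ℕ} (hn : n ≠ 0) :
    ∑ f ∈ monicPolynomials F (n + 1), polyChar θ φ 1 f = 0 := by
  obtain ⟨b, hb⟩ := (AddChar.ne_one_iff).1 hφ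
  have hlt : (C (-b) * X ^ n).degree < ((n + 1 : ℕ) : WithBot ℕ) :=
    (degree_C_mul_X_pow_le n _).trans_lt (by exact_mod_cast n.lt_succ_self)
  have htranslate : φ b * ∑ f ∈ monicPolynomials F (n + 1), polyChar θ φ 1 f =
      ∑ f ∈ monicPolynomials F (n + 1), polyChar θ φ 1 f := by
    rw [mul_sum, ← sum_monicPolynomials_add hlt (polyChar θ φ 1)]
    refine sum_congr rfl fun f hf => ?_
    obtain ⟨hmonic, hdeg⟩ := mem_monicPolynomials.1 hf
    rw [polyChar_one_add_C_mul_X_pow θ φ hmonic hn hdeg, neg_neg]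
  exact (mul_left_eq_self₀.1 htranslate).resolve_left hb

theorem lSeries_polyChar_one [Fintype F] (θ : MulChar F R) {φ : AddChar F R} (hφ : φ ≠ 1) :
    lSeries (polyChar θ φ 1) = 1 + PowerSeries.C (gaussSum θ φ) * PowerSeries.X := by
  ext n
  rw [coeff_lSeries]
  match n with
  | 0 => simp [monicPolynomials_zero]
  | 1 =>
    simp [sum_monicPolynomials_one, polyChar_X_sub_C θ φ one_ne_zero, gaussSum,
      PowerSeries.coeff_one]
  | n + 2 =>
    rw [sum_monicPolynomials_polyChar_one_eq_zero θ hφ n.succ_ne_zero]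
    simp [PowerSeries.coeff_one]

end PolyChar

section Orthogonality

variable {F R : Type*} [Field F] [CommRing R]

theorem orderOf_apply_generator (χ : MulChar F R) {g : Fˣ} (hg : ∀ u, u ∈ Subgroup.zpowers g) :
    orderOf (χ g) = orderOf χ := by
  refine orderOf_eq_orderOf_iff.2 fun n => ?_
  rw [MulChar.eq_iff hg, MulChar.pow_apply_coe, MulChar.one_apply_coe]

variable [Finite F]

theorem exists_isPrimitiveRoot_orderOf (χ : MulChar F R) :
    ∃ ζ : F, IsPrimitiveRoot ζ (orderOf χ) := by
  obtain ⟨g, hg⟩ := IsCyclic.exists_generator (α := Fˣ)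
  obtain ⟨m, hm⟩ : orderOf χ ∣ orderOf g := by
    rw [← orderOf_apply_generator χ hg]
    exact orderOf_map_dvd ((χ : F →* R).comp (Units.coeHom F)) g
  exact ⟨(g ^ m : Fˣ), IsPrimitiveRoot.coe_units_iff.2
    ((IsPrimitiveRoot.orderOf g).pow (orderOf_pos g) (by rw [hm, mul_comm]))⟩

variable {L : Type*} [Field L] [Algebra F L]

theorem apply_norm_eq_one_iff [Finite L] (χ : MulChar F R) {α : L} (hα : α ≠ 0) :
    χ (Algebra.norm F α) = 1 ↔ ∃ β, β ^ orderOf χ = α := by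
  constructor
  · intro h
    obtain ⟨γ, hγ⟩ := IsCyclic.exists_generator (α := Lˣ)
    have hnorm : ∀ u, u ∈ Subgroup.zpowers (Units.map (Algebra.norm F) γ) := fun u => by
      obtain ⟨v, rfl⟩ := FiniteField.unitsMap_norm_surjective F L u
      rw [← MonoidHom.map_zpowers]
      exact Subgroup.mem_map_of_mem _ (hγ v)
    obtain ⟨a, ha⟩ := mem_powers_iff_mem_zpowers.2 (hγ (Units.mk0 α hα))
    have ha' : (γ : L) ^ a = α := congrArg Units.val ha
    obtain ⟨m, rfl⟩ : orderOf χ ∣ a := by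
      rw [← orderOf_apply_generator χ hnorm, orderOf_dvd_iff_pow_eq_one, ← h, ← ha', map_pow,
        map_pow]
      rfl
    exact ⟨(γ : L) ^ m, by rw [← pow_mul, mul_comm, ha']⟩
  · rintro ⟨β, rfl⟩
    have hβ : β ≠ 0 := fun h => hα (by rw [h, zero_pow χ.orderOf_pos.ne'])
    rw [map_pow, map_pow, ← MulChar.pow_apply' χ χ.orderOf_pos.ne', pow_orderOf_eq_one,
      MulChar.one_apply (Algebra.norm_ne_zero_iff.2 hβ).isUnit]

variable [Fintype L] [IsDomain R]

theorem card_filter_pow_orderOf_eq (χ : MulChar F R) {α : L} (hα : α ≠ 0) :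
    (#{β : L | β ^ orderOf χ = α} : R) = ∑ i ∈ range (orderOf χ), (χ ^ i) (Algebra.norm F α) := by
  have hnorm : IsUnit (Algebra.norm F α) := (Algebra.norm_ne_zero_iff.2 hα).isUnit
  obtain ⟨ζ, hζ⟩ := exists_isPrimitiveRoot_orderOf χ
  have hζ' := hζ.map_of_injective (FaithfulSMul.algebraMap_injective F L)
  have hcard : #{β : L | β ^ orderOf χ = α} = (nthRoots (orderOf χ) α).card := by
    rw [← Multiset.toFinset_card_of_nodup (hζ'.nthRoots_nodup hα)]
    congr 1
    ext β
    simp [mem_nthRoots χ.orderOf_pos]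
  have hpow : ∀ i, (χ ^ i) (Algebra.norm F α) = χ (Algebra.norm F α) ^ i := fun i => by
    rw [← hnorm.unit_spec, MulChar.pow_apply_coe]
  simp only [hcard, hζ'.card_nthRoots, hpow]
  split_ifs with h <;> rw [← apply_norm_eq_one_iff χ hα] at h
  · simp [h]
  · have hgeom := mul_geom_sum (χ (Algebra.norm F α)) (orderOf χ)
    rw [← hpow, pow_orderOf_eq_one, MulChar.one_apply hnorm, sub_self] at hgeom
    rw [Nat.cast_zero, (mul_eq_zero.1 hgeom).resolve_left (sub_ne_zero.2 h)]

theorem sum_pow_orderOf_norm_trace (η χ : MulChar F R) (φ : AddChar F R) :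
    ∑ β : L, (η ^ orderOf χ) (Algebra.norm F β) * φ (Algebra.trace F L (β ^ orderOf χ)) =
      ∑ i ∈ range (orderOf χ), ∑ α : L,
        (η * χ ^ i) (Algebra.norm F α) * φ (Algebra.trace F L α) := by
  simp only [MulChar.pow_apply' η χ.orderOf_pos.ne', ← map_pow]
  rw [← sum_fiberwise' univ (fun β : L => β ^ orderOf χ)
    fun α => η (Algebra.norm F α) * φ (Algebra.trace F L α), sum_comm]
  refine sum_congr rfl fun α _ => ?_
  rw [sum_const, nsmul_eq_mul]
  rcases eq_or_ne α 0 with rfl | hα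
  · simp [Algebra.norm_zero, MulChar.map_zero]
  · rw [card_filter_pow_orderOf_eq χ hα, sum_mul]
    refine sum_congr rfl fun i _ => ?_
    rw [MulChar.mul_apply]
    ring

end Orthogonality

section Factorisation

variable {F R : Type*} [Field F] [CommRing R] [IsDomain R]

theorem logDerivSeries_polyChar_pow_orderOf [Finite F] (p : ℕ) [Fact p.Prime] [CharP F p]
    (η χ : MulChar F R) (φ : AddChar F R) :
    logDerivSeries p (polyChar (η ^ orderOf χ) φ (orderOf χ)) =
      ∑ i ∈ range (orderOf χ), logDerivSeries p (polyChar (η * χ ^ i) φ 1) := by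
  ext k
  simp only [logDerivSeries, map_sum, PowerSeries.coeff_mk,
    polyChar_conjPoly _ _ χ.orderOf_pos.ne', polyChar_conjPoly _ _ one_ne_zero, pow_one]
  exact sum_pow_orderOf_norm_trace η χ φ

variable [Fintype F] [CharZero R]

theorem lSeries_polyChar_pow_orderOf (η χ : MulChar F R) {φ : AddChar F R} (hφ : φ ≠ 1) :
    lSeries (polyChar (η ^ orderOf χ) φ (orderOf χ)) =
      ∏ i ∈ range (orderOf χ), (1 + PowerSeries.C (gaussSum (η * χ ^ i) φ) * PowerSeries.X) := by
  have : Fact (ringChar F).Prime := ⟨CharP.char_is_prime F (ringChar F)⟩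
  simp only [← lSeries_polyChar_one _ hφ]
  refine eq_of_derivative_eq_mul (derivative_lSeries (ringChar F) _) ?_ ?_
  · rw [logDerivSeries_polyChar_pow_orderOf]
    exact derivative_prod_eq_sum_mul _ fun i _ => derivative_lSeries (ringChar F) _
  · simp only [map_prod, constantCoeff_lSeries, prod_const_one]

theorem sum_monicPolynomials_polyChar_orderOf (η χ : MulChar F R) {φ : AddChar F R} (hφ : φ ≠ 1) :
    ∑ f ∈ monicPolynomials F (orderOf χ), polyChar (η ^ orderOf χ) φ (orderOf χ) f =
      ∏ i ∈ range (orderOf χ), gaussSum (η * χ ^ i) φ := by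
  rw [← coeff_lSeries, lSeries_polyChar_pow_orderOf η χ hφ]
  simpa using coeff_card_prod_one_add_C_mul_X (range (orderOf χ)) fun i => gaussSum (η * χ ^ i) φ

end Factorisation

section Translation

variable {F R : Type*} [Field F] [CommRing R]

theorem polyChar_natDegree_add_C (θ : MulChar F R) (φ : AddChar F R) {f : F[X]} (hf : f.Monic)
    (hdeg : f.natDegree ≠ 0) (h0 : f.coeff 0 = 0) (c : F) :
    polyChar θ φ f.natDegree (f + C c) =
      θ ((-1) ^ f.natDegree * c) * φ (-(f.natDegree * c)) * φ (rootPowerSum f.natDegree f) := by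
  rw [polyChar_apply, natDegree_add_C, coeff_add, h0, coeff_C_zero, zero_add,
    rootPowerSum_natDegree_add_C hf hdeg, sub_eq_neg_add, AddChar.map_add_eq_mul, mul_assoc]

variable [Fintype F]

theorem sum_monicPolynomials_eq_sum_add_C {A : Type*} [AddCommMonoid A] {n : ℕ} (hn : n ≠ 0)
    (w : F[X] → A) :
    ∑ f ∈ monicPolynomials F n, w f =
      ∑ c : F, ∑ f ∈ monicPolynomials F n with f.coeff 0 = 0, w (f + C c) := by
  rw [← sum_fiberwise _ fun f : F[X] => f.coeff 0]
  refine sum_congr rfl fun c _ => ?_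
  have hdeg : (C c).degree < (n : WithBot ℕ) :=
    degree_C_le.trans_lt (by exact_mod_cast Nat.pos_of_ne_zero hn)
  rw [sum_filter, sum_filter, ← sum_monicPolynomials_add hdeg]
  simp only [coeff_add, coeff_C_zero, add_eq_right]

theorem apply_pow_mul_sum_eq_gaussSum (η : MulChar F R) (φ : AddChar F R) {n : ℕ}
    (hn : (n : F) ≠ 0) :
    η n ^ n * ∑ c, (η ^ n) ((-1) ^ n * c) * φ (-(n * c)) = gaussSum (η ^ n) φ := by
  have hn0 : n ≠ 0 := by rintro rfl; exact hn Nat.cast_zero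
  rw [gaussSum, mul_sum,
    ← Equiv.sum_comp (Equiv.mulLeft₀ (-(n : F)) (neg_ne_zero.2 hn)) fun a => (η ^ n) a * φ a]
  refine sum_congr rfl fun c _ => ?_
  have hpow : (n : F) ^ n * ((-1) ^ n * c) ^ n = (-(n * c)) ^ n := by
    have hsign : (-1 : F) ^ (n * n) = (-1) ^ n := neg_one_pow_congr (by simp [Nat.even_mul])
    rw [mul_pow, ← pow_mul, hsign, neg_pow (n * c : F), mul_pow]
    ring
  rw [show Equiv.mulLeft₀ (-(n : F)) (neg_ne_zero.2 hn) c = -(n * c) from neg_mul _ c,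
    ← mul_assoc, MulChar.pow_apply' _ hn0, MulChar.pow_apply' _ hn0, ← map_pow, ← map_pow,
    ← map_pow, ← map_mul, hpow]

theorem apply_pow_mul_sum_polyChar (η : MulChar F R) (φ : AddChar F R) {n : ℕ}
    (hn : (n : F) ≠ 0) :
    η n ^ n * ∑ f ∈ monicPolynomials F n, polyChar (η ^ n) φ n f =
      gaussSum (η ^ n) φ *
        ∑ f ∈ monicPolynomials F n with f.coeff 0 = 0, φ (rootPowerSum n f) := by
  have hn0 : n ≠ 0 := by rintro rfl; exact hn Nat.cast_zero
  rw [sum_monicPolynomials_eq_sum_add_C hn0, ← apply_pow_mul_sum_eq_gaussSum η φ hn, mul_assoc,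
    sum_mul_sum]
  refine congrArg _ (sum_congr rfl fun c _ => sum_congr rfl fun f hf => ?_)
  obtain ⟨⟨hmonic, rfl⟩, h0⟩ := by simpa only [mem_filter, mem_monicPolynomials] using hf
  exact polyChar_natDegree_add_C _ φ hmonic hn0 h0 c

end Translation

section PowersOfCharacter

variable {F R : Type*} [Field F] [Finite F] [CommRing R] [IsDomain R]

theorem exists_pow_eq_of_pow_orderOf_eq_one (χ : MulChar F R) {ψ : MulChar F R}
    (hψ : ψ ^ orderOf χ = 1) : ∃ i < orderOf χ, χ ^ i = ψ := by
  obtain ⟨g, hg⟩ := IsCyclic.exists_generator (α := Fˣ)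
  have hroot : IsPrimitiveRoot (χ g) (orderOf χ) :=
    orderOf_apply_generator χ hg ▸ IsPrimitiveRoot.orderOf (χ g)
  have : NeZero (orderOf χ) := ⟨χ.orderOf_pos.ne'⟩
  obtain ⟨i, hi, h⟩ := hroot.eq_pow_of_pow_eq_one
    (show ψ g ^ orderOf χ = 1 by rw [← MulChar.pow_apply_coe, hψ, MulChar.one_apply_coe])
  exact ⟨i, hi, (MulChar.eq_iff hg _ _).2 (by rw [MulChar.pow_apply_coe, h])⟩

theorem pow_orderOf_eq_one_iff (χ ψ : MulChar F R) :
    ψ ^ orderOf χ = 1 ↔ ∃ i < orderOf χ, χ ^ i = ψ := by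
  refine ⟨exists_pow_eq_of_pow_orderOf_eq_one χ, ?_⟩
  rintro ⟨i, -, rfl⟩
  rw [pow_right_comm, pow_orderOf_eq_one, one_pow]

theorem finprod_pow_orderOf_eq_one {A : Type*} [CommMonoid A] (χ : MulChar F R)
    (w : MulChar F R → A) :
    ∏ᶠ (ψ : MulChar F R) (_ : ψ ^ orderOf χ = 1), w ψ = ∏ i ∈ range (orderOf χ), w (χ ^ i) := by
  have hinj : Set.InjOn (fun i => χ ^ i) (range (orderOf χ)) := by
    simpa using pow_injOn_Iio_orderOf (x := χ)
  rw [← prod_image hinj]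
  refine finprod_cond_eq_prod_of_cond_iff w fun {ψ} _ => ?_
  simp [pow_orderOf_eq_one_iff]

theorem finprod_pow_orderOf_eq_one_ne_one {A : Type*} [CommMonoid A] (χ : MulChar F R)
    (w : MulChar F R → A) :
    ∏ᶠ (ψ : MulChar F R) (_ : ψ ^ orderOf χ = 1 ∧ ψ ≠ 1), w ψ =
      ∏ i ∈ Ico 1 (orderOf χ), w (χ ^ i) := by
  have hinj : Set.InjOn (fun i => χ ^ i) (Ico 1 (orderOf χ)) :=
    pow_injOn_Iio_orderOf.mono fun i hi => (mem_Ico.1 hi).2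
  rw [← prod_image hinj]
  refine finprod_cond_eq_prod_of_cond_iff w fun {ψ} _ => ?_
  simp only [pow_orderOf_eq_one_iff, mem_image, mem_Ico]
  constructor
  · rintro ⟨⟨i, hi, rfl⟩, hne⟩
    exact ⟨i, ⟨Nat.one_le_iff_ne_zero.2 (by rintro rfl; exact hne (pow_zero χ)), hi⟩, rfl⟩
  · rintro ⟨i, ⟨hi, hlt⟩, rfl⟩
    exact ⟨⟨i, hlt, rfl⟩, pow_ne_one_of_lt_orderOf (by omega) hlt⟩

end PowersOfCharacter

section ProductFormula

variable {F R : Type*} [Field F] [Fintype F] [CommRing R]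

theorem natCast_ne_zero_of_dvd_card_sub_one {n : ℕ} (hn : n ∣ Fintype.card F - 1) :
    (n : F) ≠ 0 := by
  intro h
  have hcard : ((Fintype.card F - 1 : ℕ) : F) = 0 := by
    obtain ⟨m, hm⟩ := hn
    rw [hm, Nat.cast_mul, h, zero_mul]
  rw [Nat.cast_sub Fintype.card_pos, Nat.cast_card_eq_zero] at hcard
  simp at hcard

theorem gaussSum_pow_orderOf_mul_prod [IsDomain R] [CharZero R] (η χ : MulChar F R)
    {φ : AddChar F R} (hφ : φ ≠ 1) :
    gaussSum (η ^ orderOf χ) φ * ∏ i ∈ Ico 1 (orderOf χ), gaussSum (χ ^ i) φ =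
      η (orderOf χ) ^ orderOf χ * ∏ i ∈ range (orderOf χ), gaussSum (η * χ ^ i) φ := by
  have hχ : (orderOf χ : F) ≠ 0 :=
    natCast_ne_zero_of_dvd_card_sub_one χ.orderOf_dvd_card_sub_one
  have hone := apply_pow_mul_sum_polyChar 1 φ hχ
  rw [sum_monicPolynomials_polyChar_orderOf 1 χ hφ, MulChar.one_apply hχ.isUnit, one_pow, one_mul,
    one_pow, range_eq_Ico, prod_eq_prod_Ico_succ_bot χ.orderOf_pos, pow_zero, one_mul] at hone
  have hg : gaussSum (1 : MulChar F R) φ ≠ 0 := by simp [gaussSum_one_left hφ]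
  rw [← sum_monicPolynomials_polyChar_orderOf η χ hφ, apply_pow_mul_sum_polyChar η φ hχ,
    ← mul_left_cancel₀ hg hone]
  simp only [one_mul]

end ProductFormula

end HasseDavenport

open HasseDavenport in
theorem statement1_general {F R : Type*} [Field F] [Fintype F] [CommRing R] [IsDomain R]
    [CharZero R] (φ : AddChar F R) (hφ : φ ≠ 1) {d : ℕ} (hdq : d ∣ Fintype.card F - 1) {ζ : R}
    (hζ : IsPrimitiveRoot ζ d) (η : MulChar F R) :
    gaussSum (η ^ d) φ * ∏ᶠ (χ : MulChar F R) (_ : χ ^ d = 1 ∧ χ ≠ 1), gaussSum χ φ =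
      η (d : F) ^ d * ∏ᶠ (χ : MulChar F R) (_ : χ ^ d = 1), gaussSum (η * χ) φ := by
  obtain ⟨χ, rfl⟩ := MulChar.exists_mulChar_orderOf F hdq hζ
  rw [finprod_pow_orderOf_eq_one_ne_one, finprod_pow_orderOf_eq_one]
  exact gaussSum_pow_orderOf_mul_prod η χ hφ

/-- (Hasse–Davenport product formula.)  Let `d ≥ 1` be an integer dividing `q − 1` and `η`
a multiplicative character of `F_q^*`.  Then
`g(η^d) · ∏_{χ^d = 1, χ ≠ 1} g(χ) = η(d)^d · ∏_{χ^d = 1} g(ηχ)`,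
both products running over multiplicative characters `χ` of `F_q^*` with `χ^d` trivial
(`d` is viewed as the element `d·1` of `F_q`, which is nonzero since `d ∣ q − 1`).
Here `φ` is a fixed nontrivial additive character of `F_q` and `g` is the Gauss sum. -/
theorem statement1 {F : Type*} [Field F] [Fintype F]
    (φ : AddChar F ℂ) (hφ : φ ≠ 1)
    (d : ℕ) (hd : 1 ≤ d) (hdq : d ∣ Fintype.card F - 1)
    (η : MulChar F ℂ) :
    gaussSum (η ^ d) φ *
        ∏ᶠ (χ : MulChar F ℂ) (_ : χ ^ d = 1 ∧ χ ≠ 1), gaussSum χ φ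
      = η (d : F) ^ d *
        ∏ᶠ (χ : MulChar F ℂ) (_ : χ ^ d = 1), gaussSum (η * χ) φ := by
  exact statement1_general φ hφ hdq (Complex.isPrimitiveRoot_exp d (by omega)) η
end

section
/- Let n be a prime and s = (s_1,…,s_n) ∈ (ℤ/nℤ)^n with s_1+⋯+s_n = 0. Then the number of distinct values among s_1,…,s_n is not equal to 2. -/
open Finset

/-!
If the values are `a ≠ b`, with `a` taken `k` times, the sum is `k • (a - b) + n • b`, so that
`k • (a - b) = 0` once `n` annihilates the group. As `0 < k < n` and `n` is prime, `k` is coprime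
to `n`, and `a - b`, killed by both, vanishes.
-/

section TwoValued

variable {ι A : Type*} [DecidableEq A] {t : Finset ι} {f : ι → A} {a b : A}

theorem card_fiber_lt_card_of_mem_image (hb : b ∈ t.image f) (hab : a ≠ b) :
    #{i ∈ t | f i = a} < #t := by
  obtain ⟨j, hj, rfl⟩ := mem_image.mp hb
  exact card_lt_card (filter_ssubset.mpr ⟨j, hj, hab.symm⟩)

theorem sum_eq_card_fiber_nsmul_sub_add [AddCommGroup A] (hf : ∀ i ∈ t, f i = a ∨ f i = b) :
    ∑ i ∈ t, f i = #{i ∈ t | f i = a} • (a - b) + #t • b :=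
  calc
    ∑ i ∈ t, f i = ∑ i ∈ t, ((if f i = a then a - b else 0) + b) := by
      refine sum_congr rfl fun i hi ↦ ?_
      split_ifs with hia
      · rw [hia, sub_add_cancel]
      · rw [(hf i hi).resolve_left hia, zero_add]
    _ = #{i ∈ t | f i = a} • (a - b) + #t • b := by
      rw [sum_add_distrib, ← sum_filter, sum_const, sum_const]

theorem statement12_general [AddCommGroup A] (ht : (#t).Prime) (hA : ∀ x : A, #t • x = 0)
    (hsum : ∑ i ∈ t, f i = 0) : #(t.image f) ≠ 2 := by
  intro hcard
  obtain ⟨a, b, hab, himage⟩ := card_eq_two.mp hcard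
  have hvalues : ∀ i ∈ t, f i = a ∨ f i = b := fun i hi ↦ by
    simpa only [himage, mem_insert, mem_singleton] using mem_image_of_mem f hi
  have hpos : 0 < #{i ∈ t | f i = a} :=
    card_pos.mpr (fiber_nonempty_iff_mem_image.mpr (by simp [himage]))
  have hlt : #{i ∈ t | f i = a} < #t := card_fiber_lt_card_of_mem_image (by simp [himage]) hab
  have hcoprime : (#t).Coprime #{i ∈ t | f i = a} := Nat.coprime_of_lt_prime hpos.ne' hlt ht
  have hkilled : #{i ∈ t | f i = a} • (a - b) = 0 := by
    rwa [sum_eq_card_fiber_nsmul_sub_add hvalues, hA, add_zero] at hsum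
  have hsub : a - b = 0 := by
    simpa only [hcoprime.gcd_eq_one, one_nsmul] using
      gcd_nsmul_eq_zero.mpr ⟨hA (a - b), hkilled⟩
  exact hab (sub_eq_zero.mp hsub)

end TwoValued

/-- Let `n` be a prime and `s = (s_1, …, s_n) ∈ (ℤ/nℤ)^n` with `s_1 + ⋯ + s_n = 0`.
Then the number of distinct values among `s_1, …, s_n` is not equal to `2`. -/
theorem statement12 (n : ℕ) (hn : n.Prime) (s : Fin n → ZMod n)
    (hs : ∑ i, s i = 0) :
    (Finset.univ.image s).card ≠ 2 :=
  statement12_general (by simpa using hn) (by simp) hs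
end

section
/- Let n ≥ 3 be odd and s = (s_1,…,s_n) ∈ (ℤ/nℤ)^n with s_1+⋯+s_n = 0. Then the number of distinct values among s_1,…,s_n is not equal to n−1. -/
open Finset

/-!
Suppose `s` takes exactly `|G| - 1` values. Then it misses a single value `m`, and exactly one
coincidence `s a = s b` occurs, so replacing the value at `a` by `m` turns `s` into a bijection
onto `G`. Both families sum to the sum of all elements of `G`, which forces `s a = m`, although `m`
is not a value of `s`. In an abelian group of odd order the sum of all elements vanishes, because
pairing `g` with `-g` fixes only `0`.
-/

theorem neg_ne_self_of_odd_natCard {G : Type*} [AddGroup G] (hG : Odd (Nat.card G)) {g : G}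
    (hg : g ≠ 0) : -g ≠ g := by
  intro hneg
  have htwo : 2 • g = 0 := by rw [two_nsmul, ← neg_eq_iff_add_eq_zero, hneg]
  have horder : addOrderOf g = 2 := addOrderOf_eq_prime htwo hg
  exact hG.not_two_dvd_nat (horder ▸ addOrderOf_dvd_natCard g)

theorem sum_univ_eq_zero_of_odd_card {G : Type*} [AddCommGroup G] [Fintype G]
    (hG : Odd (Fintype.card G)) : ∑ g : G, g = 0 := by
  rw [← Nat.card_eq_fintype_card] at hG
  exact sum_involution (fun g _ ↦ -g) (fun g _ ↦ add_neg_cancel g)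
    (fun _ _ ↦ neg_ne_self_of_odd_natCard hG) (fun _ _ ↦ mem_univ _) (fun g _ ↦ neg_neg g)

theorem exists_bijective_update_of_card_image_add_one {α β : Type*} [Fintype α] [DecidableEq α]
    [Fintype β] [DecidableEq β] {f : α → β} (hcard : Fintype.card α = Fintype.card β)
    (himage : (univ.image f).card + 1 = Fintype.card β) :
    ∃ a, ∃ m ∉ Set.range f, Function.Bijective (Function.update f a m) := by
  obtain ⟨m, hm⟩ : ∃ m, (univ.image f)ᶜ = {m} := by
    rw [← card_eq_one, card_compl]
    omega
  have mem_range_iff (y : β) : y ∈ Set.range f ↔ y ≠ m := by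
    simpa using (Finset.ext_iff.mp hm y).not
  have hm_range : m ∉ Set.range f := fun h ↦ (mem_range_iff m).mp h rfl
  have not_injective : ¬ Function.Injective f := fun hf ↦
    hm_range (((Fintype.bijective_iff_injective_and_card f).mpr ⟨hf, hcard⟩).surjective m)
  obtain ⟨a, b, hfab, hab⟩ := Function.not_injective_iff.mp not_injective
  refine ⟨a, m, hm_range, (Fintype.bijective_iff_surjective_and_card _).mpr ⟨fun y ↦ ?_, hcard⟩⟩
  by_cases hy : y = m
  · exact ⟨a, by rw [Function.update_self, hy]⟩
  obtain ⟨i, rfl⟩ := (mem_range_iff y).mpr hy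
  by_cases hi : i = a
  · exact ⟨b, by rw [Function.update_of_ne hab.symm, hi, hfab]⟩
  · exact ⟨i, Function.update_of_ne hi m f⟩

theorem eq_of_sum_update_eq_sum {ι M : Type*} [Fintype ι] [DecidableEq ι] [AddCancelCommMonoid M]
    {s : ι → M} {a : ι} {m : M} (h : ∑ i, Function.update s a m i = ∑ i, s i) : m = s a := by
  rw [sum_update_of_mem (mem_univ a), sum_eq_add_sum_sdiff_singleton_of_mem (mem_univ a) s] at h
  exact add_right_cancel h

theorem statement13_general {G ι : Type*} [AddCommGroup G] [Fintype G] [DecidableEq G] [Fintype ι]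
    (hcard : Fintype.card ι = Fintype.card G) (s : ι → G) (hs : ∑ i, s i = ∑ g : G, g) :
    (univ.image s).card ≠ Fintype.card G - 1 := by
  classical
  intro himage
  obtain ⟨a, m, hm, hbij⟩ := exists_bijective_update_of_card_image_add_one (f := s) hcard
    (by rw [himage, Nat.sub_add_cancel Fintype.card_pos])
  have hsum : ∑ i, Function.update s a m i = ∑ i, s i :=
    (hbij.sum_comp fun g ↦ g).trans hs.symm
  exact hm ⟨a, (eq_of_sum_update_eq_sum hsum).symm⟩

/-- Let `n ≥ 3` be odd and `s = (s_1, …, s_n) ∈ (ℤ/nℤ)^n` with `s_1 + ⋯ + s_n = 0`.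
Then the number of distinct values among `s_1, …, s_n` is not equal to `n − 1`. -/
theorem statement13 (n : ℕ) (hn : 3 ≤ n) (hodd : Odd n) (s : Fin n → ZMod n)
    (hs : ∑ i, s i = 0) :
    (Finset.univ.image s).card ≠ n - 1 := by
  have : NeZero n := ⟨hodd.pos.ne'⟩
  have hsum : ∑ g : ZMod n, g = 0 := sum_univ_eq_zero_of_odd_card (by rwa [ZMod.card])
  simpa only [ZMod.card] using statement13_general (by simp) s (hs.trans hsum.symm)
end

section
/- Let n be a prime and s = (s_1,…,s_n) ∈ (ℤ/nℤ)^n with s_1+⋯+s_n = 0, such that s is not constant and the set of values {s_1,…,s_n} is not all of ℤ/nℤ. Define K_s = #{ k ∈ (ℤ/nℤ)^× : there exist a permutation σ of {1,…,n} and j ∈ ℤ/nℤ with k·s_i = s_{σ(i)} + j for all i }, and γ_s = #{ t ∈ (ℤ/nℤ)^n : t is obtained from s by permuting coordinates } (the number of distinct permutations of s). Then K_s divides γ_s. -/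
open Finset
open scoped Classical

/-!
Up to translation, the multipliers of `s` become linear: a multiplier `k ≠ 1`, with
`k * s i = s (σ i) + j`, satisfies `k * (s i - c) = s (σ i) - c` for `c = j / (k - 1)`. The
multipliers form a finite subgroup of the unit group of a field, which is cyclic, so the `c`
belonging to a generator serves all of them at once. As `s` is not constant, `s - c` is not zero,
and hence the multipliers act freely on the rearrangements of `s - c`.
-/

open MulAction
open scoped Pointwise

section Rearrangements

variable {ι α β : Type*}

/-- The families obtained from `v` by permuting its coordinates. -/
def rearrangements (v : ι → α) : Set (ι → α) :=
  {t | ∃ σ : Equiv.Perm ι, t = v ∘ σ}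

theorem rearrangements_comp_left (f : α → β) (v : ι → α) :
    rearrangements (f ∘ v) = (f ∘ ·) '' rearrangements v := by
  ext t
  constructor
  · rintro ⟨σ, rfl⟩
    exact ⟨v ∘ σ, ⟨σ, rfl⟩, rfl⟩
  · rintro ⟨_, ⟨σ, rfl⟩, rfl⟩
    exact ⟨σ, rfl⟩

theorem ncard_rearrangements_comp_left {f : α → β} (hf : f.Injective) (v : ι → α) :
    (rearrangements (f ∘ v)).ncard = (rearrangements v).ncard := by
  rw [rearrangements_comp_left, Set.ncard_image_of_injective _ hf.comp_left]

theorem rearrangements_comp_perm (v : ι → α) (τ : Equiv.Perm ι) :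
    rearrangements (v ∘ τ) = rearrangements v := by
  ext t
  exact (Equiv.mulLeft τ).exists_congr fun σ => Iff.rfl

theorem zero_mem_rearrangements_iff [Zero α] {v : ι → α} : 0 ∈ rearrangements v ↔ v = 0 := by
  constructor
  · rintro ⟨σ, h⟩
    exact σ.surjective.injective_comp_right h.symm
  · rintro rfl
    exact ⟨1, rfl⟩

theorem mem_stabilizer_rearrangements_of_smul_mem {G : Type*} [Group G] [MulAction G α] {g : G}
    {v : ι → α} (h : g • v ∈ rearrangements v) : g ∈ stabilizer G (rearrangements v) := by
  obtain ⟨σ, hσ⟩ := h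
  rw [mem_stabilizer_iff]
  calc g • rearrangements v
      = rearrangements (g • v) := (rearrangements_comp_left (g • ·) v).symm
    _ = rearrangements v := by rw [hσ, rearrangements_comp_perm]

end Rearrangements

section FreeAction

theorem card_dvd_card_of_stabilizer_eq_bot {G X : Type*} [Group G] [MulAction G X]
    (h : ∀ x : X, stabilizer G x = ⊥) : Nat.card G ∣ Nat.card X := by
  rw [Nat.card_congr (selfEquivOrbitsQuotientProd h), Nat.card_prod]
  exact dvd_mul_left _ _

theorem card_dvd_ncard_of_le_stabilizer {R M : Type*} [Ring R] [IsDomain R] [AddCommGroup M]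
    [Module R M] [Module.IsTorsionFree R M] {H : Subgroup Rˣ} {X : Set M}
    (hX : H ≤ stabilizer Rˣ X) (h0 : 0 ∉ X) : Nat.card H ∣ X.ncard := by
  let Y : SubMulAction H M :=
    { carrier := X
      smul_mem' := fun k x hx => (mem_stabilizer_set.1 (hX k.2) x).2 hx }
  refine card_dvd_card_of_stabilizer_eq_bot (X := Y) fun y =>
    (Subgroup.eq_bot_iff_forall _).2 fun k hk => Subtype.ext ?_
  have hy : (y : M) ≠ 0 := ne_of_mem_of_not_mem y.2 h0
  have hky : (k : Rˣ) ∈ stabilizer Rˣ (y : M) := congrArg Subtype.val (mem_stabilizer_iff.1 hk)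
  rwa [Module.stabilizer_units_eq_bot_of_ne_zero R hy, Subgroup.mem_bot] at hky

end FreeAction

section Multipliers

variable {ι R F : Type*} [CommRing R] [Field F]

/-- The units `k` such that `k • s` is a rearrangement of `s` up to adding a constant. They form
the group whose order is `K_s`. -/
def affineMultipliers (s : ι → R) : Subgroup Rˣ where
  carrier := {k | ∃ (σ : Equiv.Perm ι) (j : R), ∀ i, (k : R) * s i = s (σ i) + j}
  one_mem' := ⟨1, 0, fun i => by simp⟩
  mul_mem' := by
    rintro a b ⟨σ, j, hσ⟩ ⟨τ, l, hτ⟩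
    refine ⟨σ * τ, j + a * l, fun i => ?_⟩
    rw [Units.val_mul, Equiv.Perm.mul_apply]
    linear_combination (a : R) * hτ i + hσ (τ i)
  inv_mem' := by
    rintro a ⟨σ, j, hσ⟩
    refine ⟨σ⁻¹, -((a⁻¹ : Rˣ) * j), fun i => ?_⟩
    have hi : (a : R) * s (σ⁻¹ i) = s i + j := by simpa using hσ (σ⁻¹ i)
    linear_combination -(a⁻¹ : Rˣ) * hi + s (σ⁻¹ i) * a.inv_mul

theorem finite_affineMultipliers [IsDomain R] [Finite ι] {s : ι → R}
    (hs : ¬ ∃ c, ∀ i, s i = c) : Finite (affineMultipliers s) := by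
  choose σ j hσ using fun k : affineMultipliers s => k.2
  refine Finite.of_injective σ fun k l hkl => ?_
  obtain ⟨a, b, hab⟩ : ∃ a b, s a ≠ s b := by
    by_contra! h
    rcases isEmpty_or_nonempty ι with _ | ⟨⟨a⟩⟩
    · exact hs ⟨0, isEmptyElim⟩
    · exact hs ⟨s a, fun i => h i a⟩
  have hsub (i : ι) : ((k : Rˣ) - (l : Rˣ) : R) * s i = j k - j l := by
    have hl := hσ l i
    rw [← hkl] at hl
    linear_combination hσ k i - hl
  have hmul : ((k : Rˣ) - (l : Rˣ) : R) * (s a - s b) = 0 := by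
    linear_combination hsub a - hsub b
  exact Subtype.ext <| Units.ext <| sub_eq_zero.1 <|
    (mul_eq_zero.1 hmul).resolve_right (sub_ne_zero.2 hab)

theorem exists_mem_stabilizer_rearrangements_sub {s : ι → F} {k : Fˣ}
    (hk : k ∈ affineMultipliers s) :
    ∃ c, k ∈ stabilizer Fˣ (rearrangements ((· - c) ∘ s)) := by
  obtain rfl | hk1 := eq_or_ne k 1
  · exact ⟨0, one_mem _⟩
  obtain ⟨σ, j, hσ⟩ := hk
  have hk1' : (k : F) - 1 ≠ 0 := sub_ne_zero.2 (Units.val_eq_one.not.2 hk1)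
  refine ⟨j / (k - 1), mem_stabilizer_rearrangements_of_smul_mem ⟨σ, funext fun i => ?_⟩⟩
  change (k : F) * (s i - j / (k - 1)) = s (σ i) - j / (k - 1)
  linear_combination hσ i - div_mul_cancel₀ j hk1'

theorem exists_affineMultipliers_le_stabilizer (s : ι → F) [Finite (affineMultipliers s)] :
    ∃ c, affineMultipliers s ≤ stabilizer Fˣ (rearrangements ((· - c) ∘ s)) := by
  obtain ⟨g, hg⟩ := (affineMultipliers s).isCyclic_iff_exists_zpowers_eq_top.1 inferInstance
  obtain ⟨c, hc⟩ := exists_mem_stabilizer_rearrangements_sub (hg ▸ Subgroup.mem_zpowers g)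
  exact ⟨c, hg ▸ Subgroup.zpowers_le.2 hc⟩

theorem statement14_general [Finite ι] {s : ι → F} (hs : ¬ ∃ c, ∀ i, s i = c) :
    {k : Fˣ | ∃ (σ : Equiv.Perm ι) (j : F), ∀ i, (k : F) * s i = s (σ i) + j}.ncard ∣
      {t : ι → F | ∃ σ : Equiv.Perm ι, t = s ∘ σ}.ncard := by
  change Nat.card (affineMultipliers s) ∣ (rearrangements s).ncard
  have := finite_affineMultipliers hs
  obtain ⟨c, hc⟩ := exists_affineMultipliers_le_stabilizer s
  rw [← ncard_rearrangements_comp_left (sub_left_injective (b := c)) s]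
  refine card_dvd_ncard_of_le_stabilizer hc fun h0 => hs ⟨c, fun i => ?_⟩
  exact sub_eq_zero.1 (congrFun (zero_mem_rearrangements_iff.1 h0) i)

end Multipliers

/-- Let `n` be a prime and `s ∈ (ℤ/nℤ)^n` with `s_1 + ⋯ + s_n = 0`, such that `s` is not
constant and the set of values of `s` is not all of `ℤ/nℤ`.  Let `K_s` be the number of
units `k` of `ℤ/nℤ` such that `k·s` coincides with `s` up to a permutation of the
coordinates and addition of a constant `j`, and let `γ_s` be the number of distinct
permutations of `s`.  Then `K_s` divides `γ_s`. -/
theorem statement14 (n : ℕ) [NeZero n] (hn : n.Prime) (s : Fin n → ZMod n)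
    (hs : ∑ i, s i = 0)
    (hconst : ¬ ∃ c : ZMod n, ∀ i, s i = c)
    (hrange : Set.range s ≠ Set.univ) :
    (Finset.univ.filter (fun k : (ZMod n)ˣ =>
        ∃ (σ : Equiv.Perm (Fin n)) (j : ZMod n),
          ∀ i, (k : ZMod n) * s i = s (σ i) + j)).card ∣
      (Finset.univ.filter (fun t : Fin n → ZMod n =>
        ∃ σ : Equiv.Perm (Fin n), t = s ∘ σ)).card := by
  have : Fact n.Prime := ⟨hn⟩
  simpa only [← Set.ncard_coe_finset, coe_filter_univ] using statement14_general hconst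
end

section
/- Let n be an odd prime and s = (s_1,…,s_n) ∈ (ℤ/nℤ)^n with s_1+⋯+s_n = 0, such that s is not constant and the set of values of s is not all of ℤ/nℤ. For b ∈ ℤ/nℤ put k(b) = #{i : s_i = b} and let m = #{b : k(b) = 0} (so also m = ∑_{k(b)≥1}(k(b)−1)). Then there exist sequences (v_1,…,v_m) and (w_1,…,w_m) in ℤ/nℤ, where (v_1,…,v_m) is an enumeration without repetition of {b : k(b) = 0} and (w_1,…,w_m) enumerates the elements b with k(b) ≥ 2, each b appearing exactly k(b)−1 times, such that for every integer i with 1 ≤ i ≤ (2m−n+1)/2 one has w_{2i−1} − v_{2i−1} = −(w_{2i} − v_{2i}) in ℤ/nℤ. -/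
open Finset

/-!
Let `V = {b | k b = 0}` and fix any enumeration `w` of the values with multiplicity `k b - 1`; it
has `m = #V` terms, none of them in `V`. Put `c j = w (2j-1) + w (2j)`. The reflection
`x ↦ c j - x` swaps `w (2j-1)` and `w (2j)`, so it sends few elements of `V` outside `V`: at least
`2m + 1 - n ≥ 2p` elements `x ∈ V` give a genuine pair `{x, c j - x} ⊆ V`, where `p` is the number
of pairs to be chosen. It remains to choose these pairs disjoint. The polynomial in
`x 1, …, x p` expressing that no two of them meet has leading form
`∏_{i < j} (x i ^ 2 - x j ^ 2) ^ 2`, the square of a Vandermonde determinant, in which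
`∏ i, x i ^ (2 (p - 1))` has coefficient `± p!`. As `p < n` this is nonzero modulo `n`, and the
combinatorial Nullstellensatz provides the pairs.
-/

open MvPolynomial Function
open scoped Nat

section LeadingForm

variable {σ R : Type*} [CommRing R]

/-- `g` is the homogeneous part of degree `d` of `f`, and `f` has no terms of degree above `d`.
Both `f` and `g` may vanish, so this is stable under products over any commutative ring. -/
def HasLeadingForm (d : ℕ) (f g : MvPolynomial σ R) : Prop :=
  g.IsHomogeneous d ∧ ∀ t : σ →₀ ℕ, d ≤ t.degree → f.coeff t = g.coeff t

namespace HasLeadingForm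

variable {d e : ℕ} {f g f' g' : MvPolynomial σ R}

lemma coeff_eq_zero (h : HasLeadingForm d f g) {t : σ →₀ ℕ} (ht : d < t.degree) :
    f.coeff t = 0 := by
  rw [h.2 t ht.le, h.1.coeff_eq_zero ht.ne']

lemma totalDegree_le (h : HasLeadingForm d f g) : f.totalDegree ≤ d :=
  Finset.sup_le fun t ht => by
    by_contra! hlt
    exact mem_support_iff.1 ht (h.coeff_eq_zero hlt)

lemma mul (h : HasLeadingForm d f g) (h' : HasLeadingForm e f' g') :
    HasLeadingForm (d + e) (f * f') (g * g') := by
  classical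
  refine ⟨h.1.mul h'.1, fun t ht => ?_⟩
  rw [coeff_mul, coeff_mul]
  refine sum_congr rfl fun ⟨u, u'⟩ hu => ?_
  have hdeg : u.degree + u'.degree = t.degree := by
    rw [← mem_antidiagonal.1 hu, map_add]
  rcases lt_or_ge d u.degree with hlt | hle
  · rw [h.coeff_eq_zero hlt, h.1.coeff_eq_zero hlt.ne', zero_mul, zero_mul]
  rcases lt_or_ge e u'.degree with hlt' | hle'
  · rw [h'.coeff_eq_zero hlt', h'.1.coeff_eq_zero hlt'.ne', mul_zero, mul_zero]
  · rw [h.2 u (by lia), h'.2 u' (by lia)]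

lemma prod {ι : Type*} {s : Finset ι} {d : ι → ℕ} {f g : ι → MvPolynomial σ R}
    (h : ∀ i ∈ s, HasLeadingForm (d i) (f i) (g i)) :
    HasLeadingForm (∑ i ∈ s, d i) (∏ i ∈ s, f i) (∏ i ∈ s, g i) := by
  classical
  induction s using Finset.induction_on with
  | empty => exact ⟨isHomogeneous_one σ R, fun _ _ => rfl⟩
  | insert a s ha ih =>
    rw [sum_insert ha, prod_insert ha, prod_insert ha]
    exact (h a (mem_insert_self a s)).mul (ih fun i hi => h i (mem_insert_of_mem hi))

lemma add_C (hg : g.IsHomogeneous d) (hd : d ≠ 0) (a : R) : HasLeadingForm d (g + C a) g := by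
  classical
  refine ⟨hg, fun t ht => ?_⟩
  have ht0 : (0 : σ →₀ ℕ) ≠ t := by
    rintro rfl
    exact hd (by simpa using ht)
  rw [coeff_add, coeff_C, if_neg ht0, add_zero]

lemma exists_eval_ne_zero [IsDomain R] [Finite σ] (h : HasLeadingForm d f g) {t : σ →₀ ℕ}
    (ht : g.coeff t ≠ 0) (S : σ → Finset R) (hS : ∀ i, t i < #(S i)) :
    ∃ x : σ → R, (∀ i, x i ∈ S i) ∧ eval x f ≠ 0 := by
  have hdeg : t.degree = d := by
    by_contra hne
    exact ht (h.1.coeff_eq_zero hne)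
  have hcoeff : f.coeff t ≠ 0 := by rwa [h.2 t hdeg.ge]
  have htotal : f.totalDegree = t.degree :=
    (h.totalDegree_le.trans hdeg.ge).antisymm (le_totalDegree (mem_support_iff.2 hcoeff))
  exact combinatorial_nullstellensatz_exists_eval_nonzero f t hcoeff htotal S hS

end HasLeadingForm

end LeadingForm

section Vandermonde

variable {R : Type*} [CommRing R] {p : ℕ}

lemma det_vandermonde_X_eq_sum_monomial :
    (Matrix.vandermonde (X : Fin p → MvPolynomial (Fin p) R)).det =
      ∑ σ : Equiv.Perm (Fin p), Equiv.Perm.sign σ •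
        monomial (Finsupp.equivFunOnFinite.symm fun i => (σ i : ℕ)) 1 := by
  rw [← Matrix.det_transpose, Matrix.det_apply]
  refine sum_congr rfl fun σ _ => ?_
  simp [monomial_eq, Finsupp.prod_fintype, Matrix.vandermonde_apply]

lemma exponent_add_eq_iff_eq_rev_mul (σ τ : Equiv.Perm (Fin p)) :
    (Finsupp.equivFunOnFinite.symm fun i => (σ i : ℕ)) +
        (Finsupp.equivFunOnFinite.symm fun i => (τ i : ℕ)) =
      (Finsupp.equivFunOnFinite.symm fun _ => p - 1) ↔ τ = Fin.revPerm * σ := by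
  simp only [Finsupp.ext_iff, Equiv.ext_iff, Finsupp.add_apply,
    Finsupp.equivFunOnFinite_symm_apply_apply, Equiv.Perm.mul_apply, Fin.revPerm_apply, Fin.ext_iff,
    Fin.val_rev]
  exact forall_congr' fun i => by lia

lemma coeff_det_vandermonde_X_sq :
    ((Matrix.vandermonde (X : Fin p → MvPolynomial (Fin p) R)).det ^ 2).coeff
        (Finsupp.equivFunOnFinite.symm fun _ => p - 1) =
      Equiv.Perm.sign (Fin.revPerm : Equiv.Perm (Fin p)) • (p ! : R) := by
  classical
  have sign_mul_sign_rev (σ : Equiv.Perm (Fin p)) :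
      Equiv.Perm.sign σ * Equiv.Perm.sign (Fin.revPerm * σ) =
        Equiv.Perm.sign (Fin.revPerm : Equiv.Perm (Fin p)) := by
    rw [map_mul, mul_left_comm, Int.units_mul_self, mul_one]
  rw [sq, det_vandermonde_X_eq_sum_monomial, sum_mul_sum]
  simp only [smul_mul_smul_comm, monomial_mul, coeff_sum, coeff_smul, coeff_monomial,
    exponent_add_eq_iff_eq_rev_mul, mul_one, smul_ite, smul_zero, sum_ite_eq', mem_univ, if_true,
    sign_mul_sign_rev, sum_const, card_univ, Fintype.card_perm, Fintype.card_fin]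
  rw [smul_comm, nsmul_one]

end Vandermonde

section Pairs

variable {R : Type*} [CommRing R] {p : ℕ}

/-- The product over `i < j` of the four differences between an element of `{xᵢ, cᵢ - xᵢ}` and an
element of `{xⱼ, cⱼ - xⱼ}`, up to sign: it vanishes at `x` when two of these pairs meet. -/
noncomputable def pairCollisionPolynomial (c : Fin p → R) : MvPolynomial (Fin p) R :=
  ∏ i, ∏ j ∈ Ioi i, ((X j - X i) * (X j - X i + C (c i - c j)) *
    ((X j + X i + C (-c i)) * (X j + X i + C (-c j))))

lemma expand_two_det_vandermonde_X_sq :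
    expand 2 ((Matrix.vandermonde (X : Fin p → MvPolynomial (Fin p) R)).det ^ 2) =
      ∏ i, ∏ j ∈ Ioi i, ((X j - X i) * (X j - X i) * ((X j + X i) * (X j + X i))) := by
  rw [Matrix.det_vandermonde, map_pow, map_prod, ← prod_pow]
  refine prod_congr rfl fun i _ => ?_
  rw [map_prod, ← prod_pow]
  refine prod_congr rfl fun j _ => ?_
  rw [map_sub, expand_X, expand_X]
  ring

lemma hasLeadingForm_pairCollisionPolynomial (c : Fin p → R) :
    HasLeadingForm (∑ i : Fin p, ∑ _j ∈ Ioi i, 4) (pairCollisionPolynomial c)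
      (expand 2 ((Matrix.vandermonde (X : Fin p → MvPolynomial (Fin p) R)).det ^ 2)) := by
  rw [expand_two_det_vandermonde_X_sq]
  refine .prod fun i _ => .prod fun j _ => ?_
  have hsub : (X j - X i : MvPolynomial (Fin p) R).IsHomogeneous 1 :=
    (isHomogeneous_X R j).sub (isHomogeneous_X R i)
  have hadd : (X j + X i : MvPolynomial (Fin p) R).IsHomogeneous 1 :=
    (isHomogeneous_X R j).add (isHomogeneous_X R i)
  exact (HasLeadingForm.mul ⟨hsub, fun _ _ => rfl⟩ (.add_C hsub one_ne_zero _)).mul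
    ((HasLeadingForm.add_C hadd one_ne_zero _).mul (.add_C hadd one_ne_zero _))

lemma pairwise_disjoint_of_eval_pairCollisionPolynomial_ne_zero {c x : Fin p → R}
    (h : eval x (pairCollisionPolynomial c) ≠ 0) :
    Pairwise (Disjoint on fun i => ({x i, c i - x i} : Set R)) := by
  have disjoint_of_lt {i j : Fin p} (hij : i < j) :
      Disjoint ({x i, c i - x i} : Set R) {x j, c j - x j} := by
    simp only [Set.disjoint_insert_left, Set.disjoint_singleton_left, Set.mem_insert_iff,
      Set.mem_singleton_iff, not_or]
    refine ⟨⟨?_, ?_⟩, ?_, ?_⟩ <;>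
    · refine fun heq => h ?_
      rw [pairCollisionPolynomial, map_prod]
      refine prod_eq_zero (mem_univ i) ?_
      rw [map_prod]
      refine prod_eq_zero (mem_Ioi.2 hij) ?_
      simp only [map_mul, map_add, map_sub, eval_X, eval_C]
      grind
  intro i j hij
  rcases hij.lt_or_gt with hlt | hgt
  · exact disjoint_of_lt hlt
  · exact (disjoint_of_lt hgt).symm

lemma exists_pairwise_disjoint_pairs_fin [IsDomain R] (hfac : (p ! : R) ≠ 0) (c : Fin p → R)
    (A : Fin p → Finset R) (hA : ∀ i, 2 * (p - 1) < #(A i)) :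
    ∃ x : Fin p → R, (∀ i, x i ∈ A i) ∧
      Pairwise (Disjoint on fun i => ({x i, c i - x i} : Set R)) := by
  have hcoeff : (expand 2 ((Matrix.vandermonde (X : Fin p → MvPolynomial (Fin p) R)).det ^ 2)).coeff
      (2 • Finsupp.equivFunOnFinite.symm fun _ => p - 1) ≠ 0 := by
    rw [coeff_expand_smul _ two_ne_zero, coeff_det_vandermonde_X_sq]
    exact (smul_ne_zero_iff_ne _).2 hfac
  obtain ⟨x, hxA, hx⟩ :=
    (hasLeadingForm_pairCollisionPolynomial c).exists_eval_ne_zero hcoeff A hA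
  exact ⟨x, hxA, pairwise_disjoint_of_eval_pairCollisionPolynomial_ne_zero hx⟩

lemma exists_pairwiseDisjoint_pairs [IsDomain R] {ι : Type*} (s : Finset ι)
    (hfac : ((#s)! : R) ≠ 0) (c : ι → R) (A : ι → Finset R)
    (hA : ∀ i ∈ s, 2 * (#s - 1) < #(A i)) :
    ∃ x : ι → R, (∀ i ∈ s, x i ∈ A i) ∧
      (s : Set ι).PairwiseDisjoint fun i => ({x i, c i - x i} : Set R) := by
  classical
  let e := s.equivFin
  obtain ⟨x, hxA, hx⟩ := exists_pairwise_disjoint_pairs_fin hfac (fun a => c (e.symm a))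
    (fun a => A (e.symm a)) fun a => hA _ (e.symm a).2
  let y (i : ι) : R := if hi : i ∈ s then x (e ⟨i, hi⟩) else 0
  have hy {i : ι} (hi : i ∈ s) : y i = x (e ⟨i, hi⟩) := dif_pos hi
  refine ⟨y, fun i hi => ?_, fun i hi j hj hij => ?_⟩
  · simpa [hy hi] using hxA (e ⟨i, hi⟩)
  · simpa [onFun, hy hi, hy hj] using
      hx (e.injective.ne (Subtype.coe_ne_coe.1 hij) : e ⟨i, hi⟩ ≠ e ⟨j, hj⟩)

end Pairs

section Counting

variable {G : Type*} [AddCommGroup G] [DecidableEq G] {V : Finset G} {w w' : G}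

lemma card_filter_reflection_notMem_add_le [Fintype G] (hw : w ∉ V) (hw' : w' ∉ V) :
    #{x ∈ V | w + w' - x ∉ V} + #{w, w'} + #V ≤ Fintype.card G := by
  have himage : #{x ∈ V | w + w' - x ∉ V} ≤ #(Vᶜ \ {w, w'}) := by
    refine card_le_card_of_injOn (w + w' - ·) (fun x hx => ?_) sub_right_injective.injOn
    obtain ⟨hxV, hx'⟩ := mem_filter.1 hx
    simp only [coe_sdiff, Set.mem_sdiff, mem_coe, mem_compl, mem_insert, mem_singleton, not_or]
    refine ⟨hx', fun h => hw' ?_, fun h => hw ?_⟩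
    · rwa [← show x = w' by grind]
    · rwa [← show x = w by grind]
  have hsub : {w, w'} ⊆ Vᶜ := by
    simp [insert_subset_iff, hw, hw']
  have := card_sdiff_add_card_eq_card hsub
  have := card_compl_add_card V
  lia

lemma card_filter_eq_reflection_lt (hinj : Function.Injective fun x : G => x + x) (hw : w ∉ V) :
    #{x ∈ V | x = w + w' - x} < #{w, w'} := by
  have hfixed {x : G} (hx : x = w + w' - x) : x + x = w + w' := by grind
  rcases eq_or_ne w w' with rfl | hne
  · have hempty : {x ∈ V | x = w + w - x} = ∅ :=
      filter_eq_empty_iff.2 fun x hxV hx => hw (hinj (hfixed hx) ▸ hxV)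
    simp [hempty]
  · rw [card_pair hne, Nat.lt_succ_iff, card_le_one]
    intro x hx y hy
    exact hinj ((hfixed (mem_filter.1 hx).2).trans (hfixed (mem_filter.1 hy).2).symm)

lemma two_mul_card_lt_card_add_card_filter_reflection [Fintype G]
    (hinj : Function.Injective fun x : G => x + x) (hw : w ∉ V) (hw' : w' ∉ V) :
    2 * #V < Fintype.card G + #{x ∈ V | w + w' - x ∈ V ∧ x ≠ w + w' - x} := by
  have hout := card_filter_reflection_notMem_add_le hw hw'
  have hfixed := card_filter_eq_reflection_lt (w' := w') hinj hw
  have hsplit : V ⊆ {x ∈ V | w + w' - x ∉ V} ∪ {x ∈ V | x = w + w' - x} ∪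
      {x ∈ V | w + w' - x ∈ V ∧ x ≠ w + w' - x} := by
    intro x hx
    simp only [mem_union, mem_filter]
    tauto
  have := (card_le_card hsplit).trans (card_union_le _ _)
  have := card_union_le {x ∈ V | w + w' - x ∉ V} {x ∈ V | x = w + w' - x}
  lia

end Counting

section Enumeration

variable {α : Type*}

/-- The sequence `x 1, y 1, x 2, y 2, …` obtained from two sequences, all indexed from `1`. -/
def interleave (x y : ℕ → α) (i : ℕ) : α :=
  if Even i then y ((i + 1) / 2) else x ((i + 1) / 2)

lemma interleave_two_mul (x y : ℕ → α) (j : ℕ) : interleave x y (2 * j) = y j := by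
  rw [interleave, if_pos (even_two_mul j), show (2 * j + 1) / 2 = j by lia]

lemma interleave_two_mul_sub_one (x y : ℕ → α) {j : ℕ} (hj : 1 ≤ j) :
    interleave x y (2 * j - 1) = x j := by
  rw [interleave, if_neg (by grind), show (2 * j - 1 + 1) / 2 = j by lia]

lemma interleave_mem_pair (x y : ℕ → α) (i : ℕ) :
    interleave x y i ∈ ({x ((i + 1) / 2), y ((i + 1) / 2)} : Set α) := by
  unfold interleave
  split_ifs <;> simp

lemma injOn_interleave {x y : ℕ → α} {p : ℕ} (hne : ∀ j ∈ Icc 1 p, x j ≠ y j)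
    (hdisj : (Icc 1 p : Set ℕ).PairwiseDisjoint fun j => ({x j, y j} : Set α)) :
    Set.InjOn (interleave x y) (Icc 1 (2 * p)) := by
  have half_mem {i : ℕ} (hi : i ∈ Icc 1 (2 * p)) : (i + 1) / 2 ∈ Icc 1 p := by
    rw [mem_Icc] at hi ⊢
    lia
  intro i hi k hk hik
  have hhalf : (i + 1) / 2 = (k + 1) / 2 :=
    hdisj.elim_set (half_mem hi) (half_mem hk) _ (interleave_mem_pair x y i)
      (hik ▸ interleave_mem_pair x y k)
  have hxy := hne _ (half_mem hk)
  rw [interleave, interleave, hhalf] at hik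
  grind

lemma exists_bijOn_extend {β : Type*} {s S : Finset α} {T : Finset β} {f : α → β}
    (hcard : #S = #T) (hs : s ⊆ S) (hf : Set.MapsTo f s T) (hinj : Set.InjOn f s) :
    ∃ g : α → β, Set.BijOn g S T ∧ Set.EqOn g f s := by
  classical
  obtain ⟨e, he⟩ := Set.MapsTo.exists_equiv_extend_of_card_eq (α := S) (t := T)
    (s := Subtype.val ⁻¹' s) (f := f ∘ Subtype.val) (by simpa using hcard) (fun _ ha => hf ha)
    (hinj.comp Subtype.val_injective.injOn fun _ ha => ha)
  let g (a : α) : β := if ha : a ∈ S then e ⟨a, ha⟩ else f a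
  have hg {a : α} (ha : a ∈ S) : g a = e ⟨a, ha⟩ := dif_pos ha
  refine ⟨g, ⟨fun a ha => ?_, fun a ha b hb hab => ?_, fun b hb => ?_⟩, fun a ha => ?_⟩
  · rw [hg ha]
    exact (e _).2
  · rw [hg ha, hg hb] at hab
    exact congrArg Subtype.val (e.injective (Subtype.ext hab))
  · refine ⟨e.symm ⟨b, hb⟩, (e.symm ⟨b, hb⟩).2, ?_⟩
    rw [hg (e.symm ⟨b, hb⟩).2, Subtype.coe_eta, e.apply_symm_apply]
  · rw [hg (hs ha)]
    exact he ⟨a, hs ha⟩ ha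

lemma exists_card_fiber_eq {ι : Type*} [Fintype α] [DecidableEq α] [Nonempty α] (S : Finset ι)
    (f : α → ℕ) (hcard : #S = ∑ a, f a) :
    ∃ w : ι → α, ∀ a, #{i ∈ S | w i = a} = f a := by
  classical
  have e : S ≃ Σ a, Fin (f a) := Fintype.equivOfCardEq (by simpa using hcard)
  let w : ι → α := extend Subtype.val (fun i : S => (e i).1) fun _ => Classical.arbitrary α
  have hw (i : S) : w i = (e i).1 := Subtype.val_injective.extend_apply _ _ i
  refine ⟨w, fun a => ?_⟩
  rw [← Fintype.card_fin (f a), ← card_univ]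
  refine (card_bij (fun r _ => (e.symm ⟨a, r⟩ : ι)) (fun r _ => ?_) (fun r _ r' _ h => ?_)
    fun i hi => ?_).symm
  · simp [hw]
  · simpa using e.symm.injective (Subtype.ext h)
  · obtain ⟨hiS, rfl⟩ := mem_filter.1 hi
    rw [hw ⟨i, hiS⟩]
    exact ⟨(e ⟨i, hiS⟩).2, mem_univ _, by simp⟩

lemma sum_sub_one_add_card [Fintype α] (k : α → ℕ) :
    ∑ a, (k a - 1) + Fintype.card α = ∑ a, k a + #{a | k a = 0} := by
  rw [← card_univ, card_eq_sum_ones, card_filter, ← sum_add_distrib, ← sum_add_distrib]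
  refine sum_congr rfl fun a _ => ?_
  split_ifs <;> lia

lemma exists_card_fiber_eq_sub_one [Fintype α] [DecidableEq α] [Nonempty α] {k : α → ℕ}
    (hk : ∑ a, k a = Fintype.card α) :
    ∃ w : ℕ → α, ∀ a, #{i ∈ Icc 1 #{a | k a = 0} | w i = a} = k a - 1 := by
  refine exists_card_fiber_eq _ _ ?_
  have := sum_sub_one_add_card k
  rw [Nat.card_Icc]
  lia

end Enumeration

section Pairing

lemma exists_injOn_add_eq {R : Type*} [CommRing R] [IsDomain R] [DecidableEq R] {V : Finset R}
    {c : ℕ → R} {p : ℕ} (hfac : (p ! : R) ≠ 0)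
    (hcard : ∀ j ∈ Icc 1 p, 2 * (p - 1) < #{x ∈ V | c j - x ∈ V ∧ x ≠ c j - x}) :
    ∃ f : ℕ → R, Set.MapsTo f (Icc 1 (2 * p)) V ∧ Set.InjOn f (Icc 1 (2 * p)) ∧
      ∀ j ∈ Icc 1 p, f (2 * j - 1) + f (2 * j) = c j := by
  obtain ⟨x, hxA, hdisj⟩ := exists_pairwiseDisjoint_pairs (Icc 1 p) (by simpa using hfac) c
    (fun j => {x ∈ V | c j - x ∈ V ∧ x ≠ c j - x}) (by simpa using hcard)
  have hx {j : ℕ} (hj : j ∈ Icc 1 p) : x j ∈ V ∧ c j - x j ∈ V ∧ x j ≠ c j - x j :=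
    mem_filter.1 (hxA j hj)
  refine ⟨interleave x fun j => c j - x j, fun i hi => ?_,
    injOn_interleave (fun j hj => (hx hj).2.2) hdisj, fun j hj => ?_⟩
  · have hhalf : (i + 1) / 2 ∈ Icc 1 p := by
      rw [mem_coe, mem_Icc] at hi
      rw [mem_Icc]
      lia
    rcases interleave_mem_pair x (fun j => c j - x j) i with h | h <;> rw [h]
    exacts [(hx hhalf).1, (hx hhalf).2.1]
  · rw [interleave_two_mul_sub_one _ _ (mem_Icc.1 hj).1, interleave_two_mul, add_sub_cancel]

lemma exists_bijOn_add_eq_add {F : Type*} [Field F] [Fintype F] (h2 : (2 : F) ≠ 0) {V : Finset F}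
    {w : ℕ → F} (hw : ∀ i ∈ Icc 1 #V, w i ∉ V) {p : ℕ}
    (hp : 2 * p ≤ 2 * #V + 1 - Fintype.card F) (hfac : (p ! : F) ≠ 0) :
    ∃ v : ℕ → F, Set.BijOn v (Icc 1 #V) V ∧
      ∀ j ∈ Icc 1 p, v (2 * j - 1) + v (2 * j) = w (2 * j - 1) + w (2 * j) := by
  classical
  have hpV : 2 * p ≤ #V := by
    have := Fintype.one_lt_card (α := F)
    rcases V.eq_empty_or_nonempty with rfl | hV
    · rw [card_empty] at hp ⊢
      lia
    · have := card_lt_univ_of_notMem (hw 1 (mem_Icc.2 ⟨le_rfl, hV.card_pos⟩))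
      lia
  have hinj : Injective fun x : F => x + x := fun x y h => by simpa [← two_mul, h2] using h
  obtain ⟨f, hfV, hfinj, hfadd⟩ := exists_injOn_add_eq (V := V)
    (c := fun j => w (2 * j - 1) + w (2 * j)) hfac fun j hj => by
      rw [mem_Icc] at hj
      have := two_mul_card_lt_card_add_card_filter_reflection hinj
        (hw (2 * j - 1) (mem_Icc.2 (by lia))) (hw (2 * j) (mem_Icc.2 (by lia)))
      lia
  obtain ⟨v, hv, hvf⟩ := exists_bijOn_extend (S := Icc 1 #V) (by simp)
    (Icc_subset_Icc_right hpV) hfV hfinj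
  refine ⟨v, hv, fun j hj => ?_⟩
  rw [← hfadd j hj]
  rw [mem_Icc] at hj
  rw [hvf (mem_Icc.2 (by lia) : 2 * j - 1 ∈ Icc 1 (2 * p)),
    hvf (mem_Icc.2 (by lia) : 2 * j ∈ Icc 1 (2 * p))]

end Pairing

theorem statement15_general (n : ℕ) [Fact n.Prime] (hodd : Odd n) (s : Fin n → ZMod n)
    (k : ZMod n → ℕ)
    (hk : ∀ b, k b = (Finset.univ.filter (fun i : Fin n => s i = b)).card)
    (m : ℕ)
    (hm : m = (Finset.univ.filter (fun b : ZMod n => k b = 0)).card) :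
    ∃ v w : ℕ → ZMod n,
      (∀ b : ZMod n, k b = 0 ↔ ∃ i, 1 ≤ i ∧ i ≤ m ∧ v i = b) ∧
      (∀ i, 1 ≤ i → i ≤ m → ∀ j, 1 ≤ j → j ≤ m → v i = v j → i = j) ∧
      (∀ b : ZMod n,
        ((Finset.Icc 1 m).filter (fun i => w i = b)).card = k b - 1) ∧
      (∀ i : ℕ, 1 ≤ i → 2 * i ≤ 2 * m + 1 - n →
        w (2 * i - 1) - v (2 * i - 1) = -(w (2 * i) - v (2 * i))) := by
  have hsum : ∑ b, k b = Fintype.card (ZMod n) := by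
    simp only [hk, ← card_eq_sum_card_fiberwise (fun i _ => mem_univ (s i)), card_univ,
      Fintype.card_fin, ZMod.card]
  obtain ⟨w, hw⟩ := exists_card_fiber_eq_sub_one hsum
  rw [← hm] at hw
  have hw_notMem : ∀ i ∈ Icc 1 m, w i ∉ ({b | k b = 0} : Finset (ZMod n)) := by
    intro i hi hzero
    have hfiber := hw (w i)
    rw [(mem_filter.1 hzero).2, card_eq_zero] at hfiber
    exact notMem_empty i (hfiber ▸ mem_filter.2 ⟨hi, rfl⟩)
  have hmn : m ≤ n := by
    simpa only [hm, ZMod.card] using card_le_univ (filter (fun b => k b = 0) univ)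
  have hprime : n.Prime := Fact.out
  have h2 : (2 : ZMod n) ≠ 0 := by
    have hndvd : ¬ n ∣ 2 := by
      rw [Nat.prime_dvd_prime_iff_eq hprime Nat.prime_two]
      exact hodd.ne_two_of_dvd_nat dvd_rfl
    exact_mod_cast mt (ZMod.natCast_eq_zero_iff 2 n).1 hndvd
  have hfac : (((2 * m + 1 - n) / 2)! : ZMod n) ≠ 0 := by
    rw [Ne, ZMod.natCast_eq_zero_iff, hprime.dvd_factorial]
    have := hprime.two_le
    lia
  obtain ⟨v, hv, hadd⟩ := exists_bijOn_add_eq_add h2 (hm ▸ hw_notMem)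
    (p := (2 * m + 1 - n) / 2) (by rw [ZMod.card, ← hm]; lia) hfac
  rw [← hm] at hv
  refine ⟨v, w, fun b => ?_, fun i hi him j hj hjm h => ?_, hw, fun i hi him => ?_⟩
  · simpa [and_assoc, eq_comm] using Set.ext_iff.1 hv.image_eq.symm b
  · exact hv.injOn (mem_Icc.2 ⟨hi, him⟩) (mem_Icc.2 ⟨hj, hjm⟩) h
  · grind [hadd i (mem_Icc.2 ⟨hi, by lia⟩)]

/-- Let `n` be an odd prime and `s ∈ (ℤ/nℤ)^n` with `s_1 + ⋯ + s_n = 0`, `s` not constant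
and with set of values not all of `ℤ/nℤ`.  For `b ∈ ℤ/nℤ` put `k(b) = #{i : s_i = b}` and
let `m = #{b : k(b) = 0}`.  Then there exist sequences `(v_1, …, v_m)` and `(w_1, …, w_m)`
(indexed here by `1 ≤ i ≤ m`), where `v` enumerates without repetition the set
`{b : k(b) = 0}` and `w` enumerates the elements `b` with `k(b) ≥ 2`, each appearing
exactly `k(b) − 1` times, such that for every `i` with `1 ≤ i ≤ (2m − n + 1)/2` one has
`w_{2i−1} − v_{2i−1} = −(w_{2i} − v_{2i})` in `ℤ/nℤ`. -/
theorem statement15 (n : ℕ) [NeZero n] (hn : n.Prime) (hodd : Odd n)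
    (s : Fin n → ZMod n) (hs : ∑ i, s i = 0)
    (hconst : ¬ ∃ c : ZMod n, ∀ i, s i = c)
    (hrange : Set.range s ≠ Set.univ)
    (k : ZMod n → ℕ)
    (hk : ∀ b, k b = (Finset.univ.filter (fun i : Fin n => s i = b)).card)
    (m : ℕ)
    (hm : m = (Finset.univ.filter (fun b : ZMod n => k b = 0)).card) :
    ∃ v w : ℕ → ZMod n,
      (∀ b : ZMod n, k b = 0 ↔ ∃ i, 1 ≤ i ∧ i ≤ m ∧ v i = b) ∧
      (∀ i, 1 ≤ i → i ≤ m → ∀ j, 1 ≤ j → j ≤ m → v i = v j → i = j) ∧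
      (∀ b : ZMod n,
        ((Finset.Icc 1 m).filter (fun i => w i = b)).card = k b - 1) ∧
      (∀ i : ℕ, 1 ≤ i → 2 * i ≤ 2 * m + 1 - n →
        w (2 * i - 1) - v (2 * i - 1) = -(w (2 * i) - v (2 * i))) := by
  have : Fact n.Prime := ⟨hn⟩
  exact statement15_general n hodd s k hk m hm
end
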